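/- arXiv:2512.19884 — 2 statements merged into one kernel-verified Lean document; each statement's English description precedes it below -/
import Mathlib

section
/- Let G = 𝔽₂ⁿ and let X, Y be finitely supported G-valued random variables. There exists a subspace V ⊆ G such that H[𝐔_V] ≤ 7 (H[X] + H[Y]) and max{H[π_V(X)], H[π_V(Y)]} ≤ 12 d[X; Y]. -/
open Real Pointwise

noncomputable section

abbrev Fvec (n : ℕ) : Type := Fin n → ZMod 2

/-- Shannon entropy (natural log) of a finitely supported distribution. -/
def ent {A : Type*} (p : A → ℝ) : ℝ := ∑ᶠ a, Real.negMulLog (p a)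

/-- `p` is a (finitely supported) probability distribution. -/
def IsDist {A : Type*} (p : A → ℝ) : Prop := (∀ a, 0 ≤ p a) ∧ ∑ᶠ a, p a = 1

/-- Pushforward of a distribution along a map: the distribution of `f(X)` for `X ∼ p`. -/
def push {A B : Type*} (f : A → B) (p : A → ℝ) : B → ℝ := fun b => ∑ᶠ a ∈ f ⁻¹' {b}, p a

/-- Joint distribution of a pair of independent random variables. -/
def prodDist {A B : Type*} (p : A → ℝ) (q : B → ℝ) : A × B → ℝ := fun z => p z.1 * q z.2

/-- Distribution of `X + Y` for independent `X ∼ p`, `Y ∼ q`. -/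
def conv {A : Type*} [AddGroup A] (p q : A → ℝ) : A → ℝ := fun z => ∑ᶠ x, p x * q (z - x)

/-- The distribution of `X` conditioned on `U = b`, where `r` is the joint distribution of `(X, U)`. -/
def fiber {A B : Type*} (r : A × B → ℝ) (b : B) : A → ℝ := fun a => r (a, b) / push Prod.snd r b

/-- Conditional entropy `H[X | U]` of a joint distribution `r` of `(X, U)`. -/
def condEnt {A B : Type*} (r : A × B → ℝ) : ℝ := ∑ᶠ b, push Prod.snd r b * ent (fiber r b)

/-- Doubling mass `s[X ; Y]` (of independent copies with distributions `p`, `q`). -/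
def sDouble {A : Type*} [AddGroup A] (p q : A → ℝ) : ℝ := ent p + ent q - ent (conv p q)

/-- Conditional doubling mass `s[X | U ; Y | W] = 𝔼_{u ∼ U, w ∼ W} s[X_u ; Y_w]`,
where `r1`, `r2` are the joint distributions of `(X, U)` and `(Y, W)`. -/
def sCond {A U W : Type*} [AddGroup A] (r1 : A × U → ℝ) (r2 : A × W → ℝ) : ℝ :=
  ∑ᶠ u, ∑ᶠ w, push Prod.snd r1 u * push Prod.snd r2 w * sDouble (fiber r1 u) (fiber r2 w)

/-- Conditional mutual information `I[A : B | S]` of a joint distribution of `(A, B, S)`. -/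
def condMI {A B S : Type*} (r : A × B × S → ℝ) : ℝ :=
  ent (push (fun z => (z.1, z.2.2)) r) + ent (push (fun z => z.2) r)
    - ent r - ent (push (fun z => z.2.2) r)

/-- Uniform distribution on a set. -/
def unifOn {A : Type*} (s : Set A) : A → ℝ := s.indicator fun _ => (Nat.card s : ℝ)⁻¹

/-- Entropic Ruzsa distance `d[X ; Y]`. -/
def dRuzsa {A : Type*} [AddGroup A] (p q : A → ℝ) : ℝ := ent (conv p q) - ent p / 2 - ent q / 2

/-- Joint distribution of `(X, X + Y)` for independent `X ∼ p`, `Y ∼ q`. -/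
def jointSum {A : Type*} [AddGroup A] (p q : A → ℝ) : A × A → ℝ :=
  push (fun z : A × A => (z.1, z.1 + z.2)) (prodDist p q)

/-- Joint distribution of `(X, π_V(X))`. -/
def selfProj {n : ℕ} (V : Submodule (ZMod 2) (Fvec n)) (p : Fvec n → ℝ) :
    Fvec n × (Fvec n ⧸ V) → ℝ := push (fun x => (x, V.mkQ x)) p

/-- Joint distribution of independent `(X₁, X₂, Y₁, Y₂)` with `X₁, X₂ ∼ p` and `Y₁, Y₂ ∼ q`. -/
def quad {A : Type*} (p q : A → ℝ) : A × A × A × A → ℝ :=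
  fun z => p z.1 * p z.2.1 * q z.2.2.1 * q z.2.2.2

/-- Distribution of `X₁ + ⋯ + X_k` for independent `Xᵢ ∼ p i`. -/
def indepSum {A : Type*} [AddCommGroup A] (k : ℕ) (p : Fin k → A → ℝ) : A → ℝ :=
  push (fun x : Fin k → A => ∑ i, x i) (fun x => ∏ i, p i (x i))

/-- Statement `A(η, L, c)` from the paper. -/
def StA (η L c : ℝ) : Prop :=
  ∀ (n : ℕ) (p q : Fvec n → ℝ), IsDist p → IsDist q →
    ent (conv p q) ≤ (1 - η) * (ent p + ent q) →
    ∃ V : Submodule (ZMod 2) (Fvec n),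
      ent (unifOn (V : Set (Fvec n))) ≤ L * (ent p + ent q) ∧
      ent (push V.mkQ p) + ent (push V.mkQ q) ≤ (1 - c) * (ent p + ent q)

/-- Statement `B(η, ε, L)` from the paper. -/
def StB (η ε L : ℝ) : Prop :=
  ∀ (n : ℕ) (p q : Fvec n → ℝ), IsDist p → IsDist q →
    ∃ V : Submodule (ZMod 2) (Fvec n),
      ent (unifOn (V : Set (Fvec n))) ≤ L * (ent p + ent q) ∧
      ent (conv (push V.mkQ p) (push V.mkQ q)) ≥
        (1 - η) * (ent (push V.mkQ p) + ent (push V.mkQ q)) - ε * (ent p + ent q)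


namespace PF

open Finset

set_option linter.unusedSectionVars false

section basic
variable {Ω A B C : Type*} [Fintype Ω] [Fintype A] [Fintype B] [Fintype C]

/-- law of `X` under the weight `w` -/
def pm {Ω A : Type*} [Fintype Ω] (w : Ω → ℝ) (X : Ω → A) (a : A) : ℝ :=
  open Classical in ∑ ω, if X ω = a then w ω else 0

/-- entropy of `X` under the weight `w` -/
def E {Ω A : Type*} [Fintype Ω] [Fintype A] (w : Ω → ℝ) (X : Ω → A) : ℝ :=
  ∑ a, negMulLog (pm w X a)

lemma pm_nonneg {w : Ω → ℝ} (hw : ∀ ω, 0 ≤ w ω) (X : Ω → A) (a : A) : 0 ≤ pm w X a := by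
  classical
  unfold pm
  exact Finset.sum_nonneg fun ω _ => by split_ifs <;> simp [hw]

lemma sum_pm (w : Ω → ℝ) (X : Ω → A) (g : A → ℝ) :
    ∑ a, pm w X a * g a = ∑ ω, w ω * g (X ω) := by
  classical
  unfold pm
  simp_rw [Finset.sum_mul]
  rw [Finset.sum_comm]
  refine Finset.sum_congr rfl fun ω _ => ?_
  simp [ite_mul]

lemma sum_pm_one (w : Ω → ℝ) (X : Ω → A) : ∑ a, pm w X a = ∑ ω, w ω := by
  simpa using sum_pm w X (fun _ => 1)

lemma E_eq (w : Ω → ℝ) (X : Ω → A) : E w X = ∑ ω, w ω * (-log (pm w X (X ω))) := by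
  rw [← sum_pm w X (fun a => -log (pm w X a))]
  unfold E negMulLog
  exact Finset.sum_congr rfl fun a _ => by ring

lemma le_pm {w : Ω → ℝ} (hw : ∀ ω, 0 ≤ w ω) (X : Ω → A) (ω : Ω) : w ω ≤ pm w X (X ω) := by
  classical
  unfold pm
  have := Finset.single_le_sum (f := fun ω' => if X ω' = X ω then w ω' else 0)
    (fun i _ => by split_ifs <;> simp [hw]) (Finset.mem_univ ω)
  simpa using this

lemma E_congr {w : Ω → ℝ} {X : Ω → A} {Y : Ω → B}
    (h : ∀ ω ω', w ω ≠ 0 → w ω' ≠ 0 → (X ω = X ω' ↔ Y ω = Y ω')) : E w X = E w Y := by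
  classical
  rw [E_eq, E_eq]
  refine Finset.sum_congr rfl fun ω _ => ?_
  by_cases hω : w ω = 0
  · simp [hω]
  congr 3
  unfold pm
  refine Finset.sum_congr rfl fun ω' _ => ?_
  by_cases hω' : w ω' = 0
  · simp [hω']
  · simp [h ω' ω hω' hω]

lemma E_mono {w : Ω → ℝ} (hw : ∀ ω, 0 ≤ w ω) {X : Ω → A} {Y : Ω → B}
    (h : ∀ ω ω', Y ω = Y ω' → X ω = X ω') : E w X ≤ E w Y := by
  classical
  rw [E_eq, E_eq]
  refine Finset.sum_le_sum fun ω _ => ?_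
  rcases (hw ω).eq_or_lt with h0 | h0
  · simp [← h0]
  refine mul_le_mul_of_nonneg_left (neg_le_neg ?_) h0.le
  refine Real.log_le_log (h0.trans_le (le_pm hw Y ω)) ?_
  unfold pm
  refine Finset.sum_le_sum fun ω' _ => ?_
  by_cases h1 : Y ω' = Y ω
  · simp [h1, h _ _ h1]
  · simp only [h1, if_false]
    split_ifs <;> simp [hw]

lemma pm_pm (w : Ω → ℝ) (X : Ω → A) (f : A → B) : pm (pm w X) f = pm w (fun ω => f (X ω)) := by
  classical
  funext b
  have := sum_pm w X (fun a => if f a = b then 1 else 0)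
  simp only [mul_ite, mul_one, mul_zero] at this
  unfold pm at this ⊢
  exact this

lemma E_pm (w : Ω → ℝ) (X : Ω → A) (f : A → B) : E (pm w X) f = E w (fun ω => f (X ω)) := by
  unfold E; rw [pm_pm]

lemma pm_fst (w : Ω → ℝ) (X : Ω → A) (Y : Ω → B) (a : A) :
    ∑ b, pm w (fun ω => (X ω, Y ω)) (a, b) = pm w X a := by
  classical
  unfold pm
  rw [Finset.sum_comm]
  refine Finset.sum_congr rfl fun ω _ => ?_
  by_cases h : X ω = a <;> simp [h]

lemma pm_snd (w : Ω → ℝ) (X : Ω → A) (Y : Ω → B) (b : B) :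
    ∑ a, pm w (fun ω => (X ω, Y ω)) (a, b) = pm w Y b := by
  classical
  unfold pm
  rw [Finset.sum_comm]
  refine Finset.sum_congr rfl fun ω _ => ?_
  by_cases h : Y ω = b <;> simp [h]

lemma pm_id (w : Ω → ℝ) : pm w (fun x => x) = w := by
  classical
  funext a; simp [pm]

lemma E_id (w : Ω → ℝ) : E w (fun x => x) = ∑ a, negMulLog (w a) := by
  unfold E; rw [pm_id]

lemma pm_equiv {Ω' : Type*} [Fintype Ω'] (e : Ω ≃ Ω') (w : Ω' → ℝ) (X : Ω' → A) :
    pm (fun ω => w (e ω)) (fun ω => X (e ω)) = pm w X := by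
  classical
  funext a
  unfold pm
  exact e.sum_comp (fun ω => if X ω = a then w ω else 0)

lemma E_equiv {Ω' : Type*} [Fintype Ω'] (e : Ω ≃ Ω') (w : Ω' → ℝ) (X : Ω' → A) :
    E (fun ω => w (e ω)) (fun ω => X (e ω)) = E w X := by
  unfold E; rw [pm_equiv]

/-- conditional independence -/
def CI {Ω A B C : Type*} [Fintype Ω] (w : Ω → ℝ) (X : Ω → A) (Y : Ω → B) (Z : Ω → C) : Prop :=
  ∀ x y z, pm w (fun ω => (X ω, Y ω, Z ω)) (x, y, z) * pm w Z z =
    pm w (fun ω => (X ω, Z ω)) (x, z) * pm w (fun ω => (Y ω, Z ω)) (y, z)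

lemma E_diff (w : Ω → ℝ) (X : Ω → A) (Y : Ω → B) (Z : Ω → C) :
    E w (fun ω => (X ω, Z ω)) + E w (fun ω => (Y ω, Z ω))
      - E w (fun ω => (X ω, Y ω, Z ω)) - E w Z =
    ∑ ω, w ω * (log (pm w (fun ω => (X ω, Y ω, Z ω)) (X ω, Y ω, Z ω)) + log (pm w Z (Z ω))
      - log (pm w (fun ω => (X ω, Z ω)) (X ω, Z ω))
      - log (pm w (fun ω => (Y ω, Z ω)) (Y ω, Z ω))) := by
  rw [E_eq, E_eq, E_eq, E_eq, ← Finset.sum_add_distrib, ← Finset.sum_sub_distrib,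
    ← Finset.sum_sub_distrib]
  exact Finset.sum_congr rfl fun ω _ => by ring

lemma pm_congr_fun (w : Ω → ℝ) {X Y : Ω → A} (h : ∀ ω, X ω = Y ω) : pm w X = pm w Y := by
  rw [funext h]

lemma sum_quot (w : Ω → ℝ) (X : Ω → A) (Y : Ω → B) (Z : Ω → C) :
    ∑ t : A × B × C, pm w (fun ω => (X ω, Z ω)) (t.1, t.2.2) *
      pm w (fun ω => (Y ω, Z ω)) (t.2.1, t.2.2) / pm w Z t.2.2 = ∑ ω, w ω := by
  rw [← sum_pm_one w Z, Fintype.sum_prod_type]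
  simp_rw [Fintype.sum_prod_type]
  have : ∀ z, ∑ x, ∑ y, pm w (fun ω => (X ω, Z ω)) (x, z) *
      pm w (fun ω => (Y ω, Z ω)) (y, z) / pm w Z z = pm w Z z := by
    intro z
    simp_rw [← Finset.sum_div, ← Finset.mul_sum, ← Finset.sum_mul]
    rw [pm_snd, pm_snd]
    by_cases h : pm w Z z = 0
    · simp [h]
    · field_simp
  rw [← Finset.sum_congr rfl fun z _ => this z]
  rw [Finset.sum_comm]
  conv_rhs => rw [Finset.sum_comm]
  rw [Finset.sum_comm]
  refine Finset.sum_congr rfl fun x _ => ?_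
  rw [Finset.sum_comm]

lemma pm_abs {w : Ω → ℝ} (hw : ∀ ω, 0 ≤ w ω) (X : Ω → A) (f : A → B) (a : A) :
    pm w X a ≤ pm w (fun ω => f (X ω)) (f a) := by
  classical
  unfold pm
  refine Finset.sum_le_sum fun ω' _ => ?_
  by_cases h1 : X ω' = a
  · simp [h1]
  · simp only [h1, if_false]
    split_ifs <;> simp [hw]

/-- pointwise form of the information inequality -/
lemma term_ineq {p pz a b : ℝ} (hp : 0 ≤ p) (ha : p ≤ a) (hb : p ≤ b) (hz : p ≤ pz) :
    p - a * b / pz ≤ p * (log p + log pz - log a - log b) := by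
  rcases hp.eq_or_lt with h | h
  · subst h; simp; positivity
  have ha' := h.trans_le ha
  have hb' := h.trans_le hb
  have hz' := h.trans_le hz
  have h1 : log (a * b / (pz * p)) ≤ a * b / (pz * p) - 1 :=
    Real.log_le_sub_one_of_pos (by positivity)
  rw [Real.log_div (by positivity) (by positivity), Real.log_mul ha'.ne' hb'.ne',
    Real.log_mul hz'.ne' h.ne'] at h1
  have h2 := mul_le_mul_of_nonneg_left h1 hp
  have h3 : p * (a * b / (pz * p) - 1) = a * b / pz - p := by field_simp
  rw [h3] at h2
  linarith

lemma term_eq {p pz a b : ℝ} (hp : 0 ≤ p) (ha : p ≤ a) (hb : p ≤ b) (hz : p ≤ pz)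
    (heq : p - a * b / pz = p * (log p + log pz - log a - log b)) : p * pz = a * b ∨ pz = 0 := by
  by_cases hz0 : pz = 0
  · exact Or.inr hz0
  left
  rcases hp.eq_or_lt with h | h
  · subst h; simp at heq ⊢; rcases heq with (h | h) | h <;> simp_all
  have ha' := h.trans_le ha
  have hb' := h.trans_le hb
  have hz' := h.trans_le hz
  by_contra hne
  have h1 : log (a * b / (pz * p)) < a * b / (pz * p) - 1 := by
    refine Real.log_lt_sub_one_of_pos (by positivity) ?_
    intro h2
    rw [div_eq_one_iff_eq (by positivity)] at h2
    exact hne (by linarith)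
  rw [Real.log_div (by positivity) (by positivity), Real.log_mul ha'.ne' hb'.ne',
    Real.log_mul hz'.ne' h.ne'] at h1
  have h2 := mul_lt_mul_of_pos_left h1 h
  have h3 : p * (a * b / (pz * p) - 1) = a * b / pz - p := by field_simp
  rw [h3] at h2
  linarith

lemma E_diff' (w : Ω → ℝ) (X : Ω → A) (Y : Ω → B) (Z : Ω → C) :
    E w (fun ω => (X ω, Z ω)) + E w (fun ω => (Y ω, Z ω))
      - E w (fun ω => (X ω, Y ω, Z ω)) - E w Z =
    ∑ t : A × B × C, pm w (fun ω => (X ω, Y ω, Z ω)) t *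
      (log (pm w (fun ω => (X ω, Y ω, Z ω)) t) + log (pm w Z t.2.2)
      - log (pm w (fun ω => (X ω, Z ω)) (t.1, t.2.2))
      - log (pm w (fun ω => (Y ω, Z ω)) (t.2.1, t.2.2))) := by
  rw [E_diff, sum_pm w (fun ω => (X ω, Y ω, Z ω))
    (fun t => log (pm w (fun ω => (X ω, Y ω, Z ω)) t) + log (pm w Z t.2.2)
      - log (pm w (fun ω => (X ω, Z ω)) (t.1, t.2.2))
      - log (pm w (fun ω => (Y ω, Z ω)) (t.2.1, t.2.2)))]

lemma submod {w : Ω → ℝ} (hw : ∀ ω, 0 ≤ w ω) (X : Ω → A) (Y : Ω → B) (Z : Ω → C) :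
    E w (fun ω => (X ω, Y ω, Z ω)) + E w Z ≤
      E w (fun ω => (X ω, Z ω)) + E w (fun ω => (Y ω, Z ω)) := by
  have h := E_diff' w X Y Z
  have h2 : ∑ t : A × B × C, (pm w (fun ω => (X ω, Y ω, Z ω)) t -
      pm w (fun ω => (X ω, Z ω)) (t.1, t.2.2) *
      pm w (fun ω => (Y ω, Z ω)) (t.2.1, t.2.2) / pm w Z t.2.2) = 0 := by
    rw [Finset.sum_sub_distrib, sum_quot, sum_pm_one, sub_self]
  have h3 : 0 ≤ E w (fun ω => (X ω, Z ω)) + E w (fun ω => (Y ω, Z ω))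
      - E w (fun ω => (X ω, Y ω, Z ω)) - E w Z := by
    rw [h, ← h2]
    refine Finset.sum_le_sum fun t _ => term_ineq (pm_nonneg hw _ _) ?_ ?_ ?_
    · exact pm_abs hw (fun ω => (X ω, Y ω, Z ω)) (fun t => (t.1, t.2.2)) t
    · exact pm_abs hw (fun ω => (X ω, Y ω, Z ω)) (fun t => (t.2.1, t.2.2)) t
    · exact pm_abs hw (fun ω => (X ω, Y ω, Z ω)) (fun t => t.2.2) t
  linarith

lemma CI_of_eq {w : Ω → ℝ} (hw : ∀ ω, 0 ≤ w ω) {X : Ω → A} {Y : Ω → B} {Z : Ω → C}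
    (heq : E w (fun ω => (X ω, Y ω, Z ω)) + E w Z =
      E w (fun ω => (X ω, Z ω)) + E w (fun ω => (Y ω, Z ω))) : CI w X Y Z := by
  have h := E_diff' w X Y Z
  have h2 : ∑ t : A × B × C, (pm w (fun ω => (X ω, Y ω, Z ω)) t -
      pm w (fun ω => (X ω, Z ω)) (t.1, t.2.2) *
      pm w (fun ω => (Y ω, Z ω)) (t.2.1, t.2.2) / pm w Z t.2.2) = 0 := by
    rw [Finset.sum_sub_distrib, sum_quot, sum_pm_one, sub_self]
  have e1 : ∀ t, pm w (fun ω => (X ω, Y ω, Z ω)) t ≤ pm w (fun ω => (X ω, Z ω)) (t.1, t.2.2) :=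
    pm_abs hw (fun ω => (X ω, Y ω, Z ω)) (fun t => (t.1, t.2.2))
  have e2 : ∀ t, pm w (fun ω => (X ω, Y ω, Z ω)) t ≤ pm w (fun ω => (Y ω, Z ω)) (t.2.1, t.2.2) :=
    pm_abs hw (fun ω => (X ω, Y ω, Z ω)) (fun t => (t.2.1, t.2.2))
  have e3 : ∀ t, pm w (fun ω => (X ω, Y ω, Z ω)) t ≤ pm w Z t.2.2 :=
    pm_abs hw (fun ω => (X ω, Y ω, Z ω)) (fun t => t.2.2)
  have h0 : E w (fun ω => (X ω, Z ω)) + E w (fun ω => (Y ω, Z ω))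
      - E w (fun ω => (X ω, Y ω, Z ω)) - E w Z = 0 := by linarith
  rw [h0, ← h2] at h
  rw [Finset.sum_eq_sum_iff_of_le (fun t _ => term_ineq (pm_nonneg hw _ _) (e1 t) (e2 t) (e3 t))]
    at h
  intro x y z
  rcases term_eq (pm_nonneg hw _ _) (e1 (x, y, z)) (e2 _) (e3 _) (h (x, y, z) (Finset.mem_univ _))
    with h4 | h4
  · exact h4
  · simp only at h4
    have : pm w (fun ω => (X ω, Z ω)) (x, z) = 0 :=
      le_antisymm ((pm_abs hw (fun ω => (X ω, Z ω)) Prod.snd (x, z)).trans h4.le) (pm_nonneg hw _ _)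
    rw [h4, this]; simp

lemma CI.E_eq {w : Ω → ℝ} (hw : ∀ ω, 0 ≤ w ω) {X : Ω → A} {Y : Ω → B} {Z : Ω → C}
    (h : CI w X Y Z) : E w (fun ω => (X ω, Y ω, Z ω)) + E w Z =
      E w (fun ω => (X ω, Z ω)) + E w (fun ω => (Y ω, Z ω)) := by
  have h1 := E_diff w X Y Z
  have : ∀ ω, w ω * (log (pm w (fun ω => (X ω, Y ω, Z ω)) (X ω, Y ω, Z ω)) + log (pm w Z (Z ω))
      - log (pm w (fun ω => (X ω, Z ω)) (X ω, Z ω))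
      - log (pm w (fun ω => (Y ω, Z ω)) (Y ω, Z ω))) = 0 := by
    intro ω
    rcases (hw ω).eq_or_lt with h0 | h0
    · simp [← h0]
    have p1 := h0.trans_le (le_pm hw (fun ω => (X ω, Y ω, Z ω)) ω)
    have p2 := h0.trans_le (le_pm hw (fun ω => (X ω, Z ω)) ω)
    have p3 := h0.trans_le (le_pm hw (fun ω => (Y ω, Z ω)) ω)
    have p4 := h0.trans_le (le_pm hw Z ω)
    have h2 := congrArg log (h (X ω) (Y ω) (Z ω))
    rw [Real.log_mul p1.ne' p4.ne', Real.log_mul p2.ne' p3.ne'] at h2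
    rw [h2]; ring
  rw [Finset.sum_congr rfl fun ω _ => this ω] at h1
  simp at h1
  linarith

lemma E_unit {w : Ω → ℝ} (h1 : ∑ ω, w ω = 1) : E w (fun _ => ()) = 0 := by
  simp [E, pm, h1]

lemma subadd {w : Ω → ℝ} (hw : ∀ ω, 0 ≤ w ω) (h1 : ∑ ω, w ω = 1) (X : Ω → A) (Y : Ω → B) :
    E w (fun ω => (X ω, Y ω)) ≤ E w X + E w Y := by
  have := submod hw X Y (fun _ => ())
  rw [E_unit h1] at this
  rw [E_congr (X := fun ω => (X ω, Y ω, ())) (Y := fun ω => (X ω, Y ω)) (by simp),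
    E_congr (X := fun ω => (X ω, ())) (Y := X) (by simp),
    E_congr (X := fun ω => (Y ω, ())) (Y := Y) (by simp)] at this
  linarith

lemma CI.E_unit_eq {w : Ω → ℝ} (hw : ∀ ω, 0 ≤ w ω) (h1 : ∑ ω, w ω = 1) {X : Ω → A} {Y : Ω → B}
    (h : CI w X Y (fun _ => ())) :
    E w (fun ω => (X ω, Y ω)) = E w X + E w Y := by
  have := h.E_eq hw
  rw [E_unit h1] at this
  rw [E_congr (X := fun ω => (X ω, Y ω, ())) (Y := fun ω => (X ω, Y ω)) (by simp),
    E_congr (X := fun ω => (X ω, ())) (Y := X) (by simp),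
    E_congr (X := fun ω => (Y ω, ())) (Y := Y) (by simp)] at this
  linarith

end basic

section prod
variable {Ω Ω' A B C D : Type*} [Fintype Ω] [Fintype Ω'] [Fintype A] [Fintype B] [Fintype C]
  [Fintype D]

/-- product weight -/
def pr {Ω Ω' : Type*} (u : Ω → ℝ) (v : Ω' → ℝ) : Ω × Ω' → ℝ := fun z => u z.1 * v z.2

lemma pr_nonneg {u : Ω → ℝ} {v : Ω' → ℝ} (hu : ∀ ω, 0 ≤ u ω) (hv : ∀ ω, 0 ≤ v ω) (z : Ω × Ω') :
    0 ≤ pr u v z := mul_nonneg (hu _) (hv _)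

lemma pr_sum {u : Ω → ℝ} {v : Ω' → ℝ} (hu : ∑ ω, u ω = 1) (hv : ∑ ω, v ω = 1) :
    ∑ z, pr u v z = 1 := by
  unfold pr
  rw [Fintype.sum_prod_type]
  simp [← Finset.mul_sum, hu, hv]

lemma pm_pr (u : Ω → ℝ) (v : Ω' → ℝ) (f : Ω → A) (g : Ω' → B) (a : A) (b : B) :
    pm (pr u v) (fun z => (f z.1, g z.2)) (a, b) = pm u f a * pm v g b := by
  classical
  unfold pm pr
  rw [Fintype.sum_prod_type, Finset.sum_mul_sum]
  refine Finset.sum_congr rfl fun x _ => Finset.sum_congr rfl fun y _ => ?_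
  by_cases h1 : f x = a <;> by_cases h2 : g y = b <;> simp [h1, h2]

lemma pm_pr_fst (u : Ω → ℝ) {v : Ω' → ℝ} (hv : ∑ ω, v ω = 1) (f : Ω → A) :
    pm (pr u v) (fun z => f z.1) = pm u f := by
  classical
  funext a
  unfold pm pr
  rw [Fintype.sum_prod_type]
  refine Finset.sum_congr rfl fun x _ => ?_
  by_cases h1 : f x = a <;> simp [h1, ← Finset.mul_sum, hv]

lemma pm_pr_snd {u : Ω → ℝ} (v : Ω' → ℝ) (hu : ∑ ω, u ω = 1) (f : Ω' → A) :
    pm (pr u v) (fun z => f z.2) = pm v f := by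
  classical
  funext a
  unfold pm pr
  rw [Fintype.sum_prod_type, Finset.sum_comm]
  refine Finset.sum_congr rfl fun x _ => ?_
  by_cases h1 : f x = a <;> simp [h1, ← Finset.sum_mul, hu]

lemma E_pr_fst (u : Ω → ℝ) {v : Ω' → ℝ} (hv : ∑ ω, v ω = 1) (f : Ω → A) :
    E (pr u v) (fun z => f z.1) = E u f := by unfold E; rw [pm_pr_fst u hv]

lemma E_pr_snd {u : Ω → ℝ} (v : Ω' → ℝ) (hu : ∑ ω, u ω = 1) (f : Ω' → A) :
    E (pr u v) (fun z => f z.2) = E v f := by unfold E; rw [pm_pr_snd v hu]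

/-- functions of independent blocks, conditioned on functions of the blocks -/
lemma CI_pr (u : Ω → ℝ) (v : Ω' → ℝ) (f : Ω → A) (g : Ω' → B) (s : Ω → C) (t : Ω' → D) :
    CI (pr u v) (fun z => f z.1) (fun z => g z.2) (fun z => (s z.1, t z.2)) := by
  classical
  rintro x y ⟨c, d⟩
  have h1 : pm (pr u v) (fun z => (f z.1, g z.2, s z.1, t z.2)) (x, y, c, d) =
      pm u (fun ω => (f ω, s ω)) (x, c) * pm v (fun ω => (g ω, t ω)) (y, d) := by
    rw [← pm_pr]
    unfold pm
    refine Finset.sum_congr rfl fun z _ => ?_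
    simp only [Prod.mk.injEq]
    congr 1
    simp only [eq_iff_iff]; tauto
  have h2 : pm (pr u v) (fun z => (f z.1, s z.1, t z.2)) (x, c, d) =
      pm u (fun ω => (f ω, s ω)) (x, c) * pm v t d := by
    rw [← pm_pr]
    unfold pm
    refine Finset.sum_congr rfl fun z _ => ?_
    simp only [Prod.mk.injEq]
    congr 1
    simp only [eq_iff_iff]; tauto
  have h3 : pm (pr u v) (fun z => (g z.2, s z.1, t z.2)) (y, c, d) =
      pm u s c * pm v (fun ω => (g ω, t ω)) (y, d) := by
    rw [← pm_pr]
    unfold pm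
    refine Finset.sum_congr rfl fun z _ => ?_
    simp only [Prod.mk.injEq]
    congr 1
    simp only [eq_iff_iff]; tauto
  rw [h1, h2, h3, pm_pr]
  ring

lemma CI_pr_unit (u : Ω → ℝ) (v : Ω' → ℝ) (f : Ω → A) (g : Ω' → B) :
    CI (pr u v) (fun z => f z.1) (fun z => g z.2) (fun _ => ()) := by
  classical
  rintro x y ⟨⟩
  have h := CI_pr u v f g (fun _ => ()) (fun _ => ()) x y ((), ())
  unfold pm at h ⊢
  simpa using h

lemma E_pr {u : Ω → ℝ} {v : Ω' → ℝ} (hu : ∀ ω, 0 ≤ u ω) (hv : ∀ ω, 0 ≤ v ω)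
    (hu1 : ∑ ω, u ω = 1) (hv1 : ∑ ω, v ω = 1) (f : Ω → A) (g : Ω' → B) :
    E (pr u v) (fun z => (f z.1, g z.2)) = E u f + E v g := by
  rw [(CI_pr_unit u v f g).E_unit_eq (pr_nonneg hu hv) (pr_sum hu1 hv1), E_pr_fst u hv1,
    E_pr_snd v hu1]

lemma CI_equiv (e : Ω ≃ Ω') {w : Ω' → ℝ} {X : Ω' → A} {Y : Ω' → B} {Z : Ω' → C}
    (h : CI w X Y Z) :
    CI (fun ω => w (e ω)) (fun ω => X (e ω)) (fun ω => Y (e ω)) (fun ω => Z (e ω)) := by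
  intro x y z
  have := h x y z
  rw [← pm_equiv e w Z, ← pm_equiv e w (fun ω => (X ω, Y ω, Z ω)),
    ← pm_equiv e w (fun ω => (X ω, Z ω)), ← pm_equiv e w (fun ω => (Y ω, Z ω))] at this
  exact this

/-- pushing the first block forward -/
lemma E_pm_pr (w : Ω → ℝ) (X : Ω → A) (v : Ω' → ℝ) (f : A × Ω' → B) :
    E (pr (pm w X) v) f = E (pr w v) (fun z => f (X z.1, z.2)) := by
  have : pr (pm w X) v = pm (pr w v) (fun z => (X z.1, z.2)) := by
    funext z
    obtain ⟨a, b⟩ := z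
    rw [pm_pr w v X (fun x => x), pm_id]; rfl
  rw [this, E_pm]

end prod

end PF

namespace PF

open Finset

set_option linter.unusedSectionVars false

section func
variable {Ω Ω' A B C : Type*} [Fintype Ω] [Fintype Ω'] [Fintype A] [Fintype B] [Fintype C]
variable {G : Type*} [CommRing G] [Fintype G]

/-- probability weight -/
def Pb {Ω : Type*} [Fintype Ω] (w : Ω → ℝ) : Prop := (∀ ω, 0 ≤ w ω) ∧ ∑ ω, w ω = 1

lemma Pb.pr {u : Ω → ℝ} {v : Ω' → ℝ} (hu : Pb u) (hv : Pb v) : Pb (pr u v) :=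
  ⟨pr_nonneg hu.1 hv.1, pr_sum hu.2 hv.2⟩

/-- the functional `H[X₀ + X | Z] - H[X | Z] / 2` -/
def F (p0 : G → ℝ) (w : Ω → ℝ) (X : Ω → G) (Z : Ω → C) : ℝ :=
  E (pr w p0) (fun z => (z.2 + X z.1, Z z.1)) - E w Z - (E w (fun ω => (X ω, Z ω)) - E w Z) / 2

/-- the functional `H[X₀ + X] - H[X] / 2` -/
def F0 (p0 : G → ℝ) (w : Ω → ℝ) (X : Ω → G) : ℝ :=
  E (pr w p0) (fun z => z.2 + X z.1) - E w X / 2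

lemma F_le {p0 : G → ℝ} {w : Ω → ℝ} (h0 : Pb p0) (hw : Pb w) (X : Ω → G) (Z : Ω → C) :
    F p0 w X Z ≤ F0 p0 w X + (E w X - (E w (fun ω => (X ω, Z ω)) - E w Z)) / 2 := by
  have h1 := subadd (hw.pr h0).1 (hw.pr h0).2 (fun z => z.2 + X z.1) (fun z => Z z.1)
  rw [E_pr_fst w h0.2] at h1
  unfold F F0
  linarith

lemma F_trans (p0 : G → ℝ) (w : Ω → ℝ) {X Y : Ω → G} {Z : Ω → C} (g : C → G)
    (h : ∀ ω, Y ω = X ω + g (Z ω)) : F p0 w Y Z = F p0 w X Z := by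
  unfold F
  rw [E_congr (w := w) (X := fun ω => (Y ω, Z ω)) (Y := fun ω => (X ω, Z ω)),
    E_congr (w := pr w p0) (X := fun z => (z.2 + Y z.1, Z z.1))
      (Y := fun z => (z.2 + X z.1, Z z.1))]
  · intro ω ω' _ _
    simp only [Prod.mk.injEq, h]
    constructor
    · rintro ⟨h1, h2⟩
      rw [h2] at h1
      exact ⟨by linear_combination h1, h2⟩
    · rintro ⟨h1, h2⟩
      rw [h2]
      exact ⟨by linear_combination h1, rfl⟩
  · intro ω ω' _ _
    simp only [Prod.mk.injEq, h]
    constructor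
    · rintro ⟨h1, h2⟩
      rw [h2] at h1
      exact ⟨by linear_combination h1, h2⟩
    · rintro ⟨h1, h2⟩
      rw [h2]
      exact ⟨by linear_combination h1, rfl⟩

lemma F0_law (p0 : G → ℝ) {w : Ω → ℝ} {w' : Ω' → ℝ} {X : Ω → G} {X' : Ω' → G}
    (h : pm w X = pm w' X') : F0 p0 w X = F0 p0 w' X' := by
  unfold F0
  have h1 := E_pm_pr w X p0 (fun z => z.2 + z.1)
  have h2 := E_pm_pr w' X' p0 (fun z => z.2 + z.1)
  rw [← h1, ← h2, h]
  unfold E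
  rw [h]

lemma F_law (p0 : G → ℝ) {w : Ω → ℝ} {w' : Ω' → ℝ} {X : Ω → G} {X' : Ω' → G} {Z : Ω → C}
    {Z' : Ω' → C}
    (h : pm w (fun ω => (X ω, Z ω)) = pm w' (fun ω => (X' ω, Z' ω))) :
    F p0 w X Z = F p0 w' X' Z' := by
  unfold F
  have h1 := E_pm_pr w (fun ω => (X ω, Z ω)) p0 (fun z => (z.2 + z.1.1, z.1.2))
  have h2 := E_pm_pr w' (fun ω => (X' ω, Z' ω)) p0 (fun z => (z.2 + z.1.1, z.1.2))
  have h3 : E w Z = E w' Z' := by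
    rw [← E_pm w (fun ω => (X ω, Z ω)) Prod.snd, ← E_pm w' (fun ω => (X' ω, Z' ω)) Prod.snd, h]
  rw [← h1, ← h2, h, h3]
  unfold E
  rw [h]

/-- Kaimanovich-Vershik type inequality -/
lemma KV {p0 : G → ℝ} {w : Ω → ℝ} (h0 : Pb p0) (hw : Pb w) {X Y : Ω → G}
    (h : E w (fun ω => (X ω, Y ω)) = E w X + E w Y) :
    E (pr w p0) (fun z => z.2 + (X z.1 + Y z.1)) ≤
      E w (fun ω => X ω + Y ω) + E (pr w p0) (fun z => z.2 + X z.1) - E w X := by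
  have hh := hw.pr h0
  have s := submod hh.1 (fun z => z.2) (fun z => Y z.1) (fun z => z.2 + (X z.1 + Y z.1))
  have e1 : E (pr w p0) (fun z => (z.2, Y z.1, z.2 + (X z.1 + Y z.1))) =
      E w X + E w Y + E p0 (fun x => x) := by
    rw [← h, ← E_pr hw.1 h0.1 hw.2 h0.2]
    apply E_congr
    intro a b _ _
    simp only [Prod.mk.injEq]
    grind
  have e2 : E (pr w p0) (fun z => (z.2, z.2 + (X z.1 + Y z.1))) =
      E w (fun ω => X ω + Y ω) + E p0 (fun x => x) := by
    rw [← E_pr hw.1 h0.1 hw.2 h0.2]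
    apply E_congr
    intro a b _ _
    simp only [Prod.mk.injEq]
    grind
  have e3 : E (pr w p0) (fun z => (Y z.1, z.2 + (X z.1 + Y z.1))) ≤
      E w Y + E (pr w p0) (fun z => z.2 + X z.1) := by
    rw [← E_pr_fst w h0.2 Y]
    refine le_of_eq_of_le ?_ (subadd hh.1 hh.2 _ _)
    apply E_congr
    intro a b _ _
    simp only [Prod.mk.injEq]
    grind
  linarith

lemma F0_add {p0 : G → ℝ} {w : Ω → ℝ} (h0 : Pb p0) (hw : Pb w) {X Y : Ω → G}
    (h : E w (fun ω => (X ω, Y ω)) = E w X + E w Y) :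
    F0 p0 w (fun ω => X ω + Y ω) ≤ F0 p0 w X + (E w (fun ω => X ω + Y ω) - E w X) / 2 := by
  have := KV h0 hw h
  unfold F0
  linarith

/-- entropic Ruzsa distance -/
def dd (p q : G → ℝ) : ℝ :=
  E (pr p q) (fun z => z.1 + z.2) - E p (fun x => x) / 2 - E q (fun x => x) / 2

/-- the functional to be minimised -/
def tau (p0 q0 : G → ℝ) (η : ℝ) (p q : G → ℝ) : ℝ :=
  dd p q + η * (F0 p0 p (fun x => x) + F0 q0 q (fun x => x))

lemma scale {P : ℝ} (hP : 0 < P) (R : A → ℝ) (hR : ∑ a, R a = P) :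
    P * ∑ a, negMulLog (R a / P) = ∑ a, negMulLog (R a) - negMulLog P := by
  have h : ∀ a, P * negMulLog (R a / P) = negMulLog (R a) + R a * log P := by
    intro a
    by_cases h0 : R a = 0
    · simp [h0]
    unfold negMulLog
    rw [Real.log_div h0 hP.ne']
    field_simp
    ring
  rw [Finset.mul_sum, Finset.sum_congr rfl fun a _ => h a, Finset.sum_add_distrib,
    ← Finset.sum_mul, hR]
  unfold negMulLog
  ring

lemma pm_map_cond (w : Ω → ℝ) (Y : Ω → B) (Z : Ω → C) (f : B → A) (s : A) (z : C) :
    pm w (fun ω => (f (Y ω), Z ω)) (s, z) = pm (fun y => pm w (fun ω => (Y ω, Z ω)) (y, z)) f s := by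
  classical
  unfold pm
  refine Eq.symm (Eq.trans
    (b := ∑ y, ∑ ω, if f y = s ∧ Y ω = y ∧ Z ω = z then w ω else 0) ?_ ?_)
  · refine Finset.sum_congr rfl fun y _ => ?_
    by_cases h : f y = s <;> simp [h]
  rw [Finset.sum_comm]
  refine Finset.sum_congr rfl fun ω _ => ?_
  rw [Finset.sum_eq_single (Y ω)]
  · simp
  · intro y _ hy
    simp [hy.symm]
  · simp

lemma pm_div (u : B → ℝ) (c : ℝ) (f : B → A) (s : A) :
    pm (fun y => u y / c) f s = pm u f s / c := by
  classical
  unfold pm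
  rw [Finset.sum_div]
  exact Finset.sum_congr rfl fun y _ => by split_ifs <;> simp

lemma cond_E (w : Ω → ℝ) (Y : Ω → B) (Z : Ω → C) (f : B → A) (z : C) (hz : 0 < pm w Z z) :
    pm w Z z * E (fun y => pm w (fun ω => (Y ω, Z ω)) (y, z) / pm w Z z) f =
      ∑ s, negMulLog (pm w (fun ω => (f (Y ω), Z ω)) (s, z)) - negMulLog (pm w Z z) := by
  unfold E
  simp_rw [pm_div, ← pm_map_cond]
  exact scale hz _ (pm_snd w _ Z z)

lemma cond_F (p0 : G → ℝ) (h0 : Pb p0) (w : Ω → ℝ) (X : Ω → G) (Z : Ω → C) (z : C)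
    (hz : 0 < pm w Z z) :
    pm w Z z * F0 p0 (fun y => pm w (fun ω => (X ω, Z ω)) (y, z) / pm w Z z) (fun x => x) =
      ∑ s, negMulLog (pm (pr w p0) (fun t => (t.2 + X t.1, Z t.1)) (s, z)) - negMulLog (pm w Z z)
      - (∑ s, negMulLog (pm w (fun ω => (X ω, Z ω)) (s, z)) - negMulLog (pm w Z z)) / 2 := by
  unfold F0
  have h1 := cond_E w X Z (fun x => x) z hz
  have hZ : pm (pr w p0) (fun t => Z t.1) = pm w Z := pm_pr_fst w h0.2 Z
  have h2 := cond_E (pr w p0) (fun t => (X t.1, t.2)) (fun t => Z t.1) (fun y => y.2 + y.1) z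
    (by rw [hZ]; exact hz)
  rw [hZ] at h2
  have h3 : (fun y => pm (pr w p0) (fun t => ((X t.1, t.2), Z t.1)) (y, z) / pm w Z z) =
      pr (fun y => pm w (fun ω => (X ω, Z ω)) (y, z) / pm w Z z) p0 := by
    funext y
    obtain ⟨x, g⟩ := y
    have := pm_pr w p0 (fun ω => (X ω, Z ω)) (fun x => x) (x, z) g
    rw [pm_id] at this
    have h4 : pm (pr w p0) (fun t => ((X t.1, t.2), Z t.1)) ((x, g), z) =
        pm (pr w p0) (fun t => ((X t.1, Z t.1), t.2)) ((x, z), g) := by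
      classical
      unfold pm
      refine Finset.sum_congr rfl fun t _ => ?_
      simp only [Prod.mk.injEq]
      congr 1
      simp only [eq_iff_iff]; tauto
    rw [h4, this]
    simp only [pr]
    ring
  rw [h3] at h2
  rw [mul_sub, h2, mul_div_assoc', h1]

lemma CM {p0 q0 : G → ℝ} (h0 : Pb p0) (k0 : Pb q0) {η T : ℝ}
    (hT : ∀ p q : G → ℝ, Pb p → Pb q → T ≤ tau p0 q0 η p q)
    {w : Ω → ℝ} (hw : Pb w) {X Y : Ω → G} {Z : Ω → C} (h : CI w X Y Z) :
    T ≤ E w (fun ω => (X ω + Y ω, Z ω)) - E w Z - (E w (fun ω => (X ω, Z ω)) - E w Z) / 2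
      - (E w (fun ω => (Y ω, Z ω)) - E w Z) / 2 + η * (F p0 w X Z + F q0 w Y Z) := by
  have key : ∀ z, pm w Z z * T ≤
      ∑ s, negMulLog (pm w (fun ω => (X ω + Y ω, Z ω)) (s, z)) - negMulLog (pm w Z z)
      - (∑ s, negMulLog (pm w (fun ω => (X ω, Z ω)) (s, z)) - negMulLog (pm w Z z)) / 2
      - (∑ s, negMulLog (pm w (fun ω => (Y ω, Z ω)) (s, z)) - negMulLog (pm w Z z)) / 2
      + η * ((∑ s, negMulLog (pm (pr w p0) (fun t => (t.2 + X t.1, Z t.1)) (s, z))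
          - negMulLog (pm w Z z)
          - (∑ s, negMulLog (pm w (fun ω => (X ω, Z ω)) (s, z)) - negMulLog (pm w Z z)) / 2)
        + (∑ s, negMulLog (pm (pr w q0) (fun t => (t.2 + Y t.1, Z t.1)) (s, z))
          - negMulLog (pm w Z z)
          - (∑ s, negMulLog (pm w (fun ω => (Y ω, Z ω)) (s, z)) - negMulLog (pm w Z z)) / 2)) := by
    intro z
    rcases (pm_nonneg hw.1 Z z).eq_or_lt with hz | hz
    · have a1 : ∀ (Y₁ : Ω → G) (s : G),
          pm w (fun ω => (Y₁ ω, Z ω)) (s, z) = 0 := by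
        intro Y₁ s
        exact le_antisymm ((pm_abs hw.1 (fun ω => (Y₁ ω, Z ω)) Prod.snd (s, z)).trans hz.ge)
          (pm_nonneg hw.1 _ _)
      have a2 : ∀ (r : G → ℝ) (_ : Pb r) (Y₁ : Ω × G → G) (s : G),
          pm (pr w r) (fun t => (Y₁ t, Z t.1)) (s, z) = 0 := by
        intro r hr Y₁ s
        refine le_antisymm ((pm_abs (hw.pr hr).1 (fun ω => (Y₁ ω, Z ω.1)) Prod.snd (s, z)).trans
          (le_of_eq ?_)) (pm_nonneg (hw.pr hr).1 _ _)
        exact (congrFun (pm_pr_fst w hr.2 Z) z).trans hz.symm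
      simp [a1, a2 p0 h0, a2 q0 k0, ← hz]
    · set p : G → ℝ := fun y => pm w (fun ω => (X ω, Z ω)) (y, z) / pm w Z z with hp
      set q : G → ℝ := fun y => pm w (fun ω => (Y ω, Z ω)) (y, z) / pm w Z z with hq
      have pp : Pb p := ⟨fun y => div_nonneg (pm_nonneg hw.1 _ _) hz.le, by
        rw [hp, ← Finset.sum_div, pm_snd, div_self hz.ne']⟩
      have pq : Pb q := ⟨fun y => div_nonneg (pm_nonneg hw.1 _ _) hz.le, by
        rw [hq, ← Finset.sum_div, pm_snd, div_self hz.ne']⟩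
      have h1 := mul_le_mul_of_nonneg_left (hT p q pp pq) hz.le
      refine h1.trans (le_of_eq ?_)
      rw [← cond_F p0 h0 w X Z z hz, ← cond_F q0 k0 w Y Z z hz,
        ← cond_E w X Z (fun x => x) z hz, ← cond_E w Y Z (fun x => x) z hz,
        ← cond_E w (fun ω => (X ω, Y ω)) Z (fun t => t.1 + t.2) z hz]
      have h3 : (fun y => pm w (fun ω => ((X ω, Y ω), Z ω)) (y, z) / pm w Z z) = pr p q := by
        funext y
        obtain ⟨x, y⟩ := y
        have h5 := h x y z
        have h4 : pm w (fun ω => ((X ω, Y ω), Z ω)) ((x, y), z) =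
            pm w (fun ω => (X ω, Y ω, Z ω)) (x, y, z) := by
          classical
          unfold pm
          refine Finset.sum_congr rfl fun t _ => ?_
          simp only [Prod.mk.injEq]
          congr 1
          simp only [eq_iff_iff]; tauto
        rw [h4]
        simp only [pr, hp, hq]
        field_simp
        linarith
      rw [h3]
      unfold tau dd
      ring
  have hs := Finset.sum_le_sum fun z (_ : z ∈ (Finset.univ : Finset C)) => key z
  rw [← Finset.sum_mul, sum_pm_one, hw.2, one_mul] at hs
  refine hs.trans (le_of_eq ?_)
  simp only [Finset.sum_add_distrib, Finset.sum_sub_distrib, ← Finset.mul_sum, ← Finset.sum_div]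
  simp only [F, E, Fintype.sum_prod_type_right]

end func

section bsg
variable {Ω A B C : Type*} [Fintype Ω] [Fintype A] [Fintype B] [Fintype C]
variable {G : Type*} [CommRing G] [Fintype G]

/-- conditionally independent copies given `Z` -/
def cc {Ω C : Type*} [Fintype Ω] (w : Ω → ℝ) (Z : Ω → C) : Ω × Ω → ℝ :=
  open Classical in fun z => if Z z.1 = Z z.2 then w z.1 * w z.2 / pm w Z (Z z.1) else 0

lemma cc_nonneg {w : Ω → ℝ} (hw : ∀ ω, 0 ≤ w ω) (Z : Ω → C) (z : Ω × Ω) : 0 ≤ cc w Z z := by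
  classical
  unfold cc
  split_ifs
  · exact div_nonneg (mul_nonneg (hw _) (hw _)) (pm_nonneg hw _ _)
  · exact le_rfl

lemma cc_supp {w : Ω → ℝ} {Z : Ω → C} {z : Ω × Ω} (h : cc w Z z ≠ 0) : Z z.1 = Z z.2 := by
  classical
  unfold cc at h
  by_contra h2
  simp [h2] at h

lemma cc_swap (w : Ω → ℝ) (Z : Ω → C) (z : Ω × Ω) : cc w Z z.swap = cc w Z z := by
  classical
  unfold cc
  by_cases h : Z z.1 = Z z.2
  · simp [h, mul_comm]
  · simp [h, Ne.symm h]

lemma cc_marg {w : Ω → ℝ} (hw : ∀ ω, 0 ≤ w ω) (Z : Ω → C) (ω : Ω) : ∑ ω', cc w Z (ω, ω') = w ω := by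
  classical
  have : ∑ ω', cc w Z (ω, ω') = w ω * pm w Z (Z ω) / pm w Z (Z ω) := by
    unfold cc
    conv_rhs => rw [mul_div_right_comm]
    conv_rhs => arg 2; unfold pm
    rw [Finset.mul_sum]
    refine Finset.sum_congr rfl fun ω' _ => ?_
    by_cases h : Z ω = Z ω'
    · simp only [h, if_true]; ring
    · simp [h, Ne.symm h]
  rw [this]
  by_cases h : pm w Z (Z ω) = 0
  · have : w ω = 0 := le_antisymm ((le_pm hw Z ω).trans h.le) (hw ω)
    simp [this]
  · field_simp

lemma pm_cc_fst {w : Ω → ℝ} (hw : ∀ ω, 0 ≤ w ω) (Z : Ω → C) (f : Ω → A) :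
    pm (cc w Z) (fun z => f z.1) = pm w f := by
  classical
  funext a
  unfold pm
  rw [Fintype.sum_prod_type]
  refine Finset.sum_congr rfl fun x _ => ?_
  by_cases h1 : f x = a
  · simp [h1, cc_marg hw]
  · simp [h1]

lemma pm_cc_snd {w : Ω → ℝ} (hw : ∀ ω, 0 ≤ w ω) (Z : Ω → C) (f : Ω → A) :
    pm (cc w Z) (fun z => f z.2) = pm w f := by
  rw [← pm_cc_fst hw Z f, ← pm_equiv (Equiv.prodComm Ω Ω)]
  congr 1
  funext z
  exact cc_swap w Z z

lemma pm_congr_ae {w : Ω → ℝ} {X Y : Ω → A} (h : ∀ ω, w ω ≠ 0 → X ω = Y ω) : pm w X = pm w Y := by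
  classical
  funext a
  unfold pm
  refine Finset.sum_congr rfl fun ω _ => ?_
  by_cases h0 : w ω = 0
  · simp [h0]
  · rw [h ω h0]

lemma cc_Pb {w : Ω → ℝ} (hw : Pb w) (Z : Ω → C) : Pb (cc w Z) := by
  refine ⟨cc_nonneg hw.1 Z, ?_⟩
  rw [Fintype.sum_prod_type, Finset.sum_congr rfl fun ω _ => cc_marg hw.1 Z ω, hw.2]

lemma cc_CI {w : Ω → ℝ} (hw : Pb w) (Z : Ω → C) (f : Ω → A) (g : Ω → B) :
    CI (cc w Z) (fun z => f z.1) (fun z => g z.2) (fun z => Z z.1) := by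
  classical
  intro x y z
  have h1 : pm (cc w Z) (fun z => (f z.1, Z z.1)) = pm w (fun ω => (f ω, Z ω)) :=
    pm_cc_fst hw.1 Z (fun ω => (f ω, Z ω))
  have h2 : pm (cc w Z) (fun z => (g z.2, Z z.1)) = pm w (fun ω => (g ω, Z ω)) := by
    rw [← pm_cc_snd hw.1 Z (fun ω => (g ω, Z ω))]
    exact pm_congr_ae fun ω hω => by rw [cc_supp hω]
  have h3 : pm (cc w Z) (fun z => Z z.1) = pm w Z := pm_cc_fst hw.1 Z Z
  rw [h1, h2, h3]
  have h4 : pm (cc w Z) (fun t => (f t.1, g t.2, Z t.1)) (x, y, z) =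
      pm w (fun ω => (f ω, Z ω)) (x, z) * pm w (fun ω => (g ω, Z ω)) (y, z) / pm w Z z := by
    conv_rhs => arg 1; unfold pm
    conv_lhs => unfold pm
    rw [Finset.sum_mul_sum, Fintype.sum_prod_type, Finset.sum_div]
    refine Finset.sum_congr rfl fun a _ => ?_
    rw [Finset.sum_div]
    refine Finset.sum_congr rfl fun b _ => ?_
    unfold cc
    simp only [Prod.mk.injEq]
    by_cases e1 : f a = x <;> by_cases e2 : g b = y <;> by_cases e3 : Z a = z <;>
      by_cases e4 : Z b = z <;> simp [e1, e2, e3, e4]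
    intro h; exact absurd h.symm e4
  rw [h4]
  by_cases h : pm w Z z = 0
  · have : pm w (fun ω => (f ω, Z ω)) (x, z) = 0 :=
      le_antisymm ((pm_abs hw.1 (fun ω => (f ω, Z ω)) Prod.snd (x, z)).trans h.le)
        (pm_nonneg hw.1 _ _)
    simp [this]
  · field_simp

lemma endgame (h2 : ∀ x : G, x + x = 0) {p0 q0 : G → ℝ} (h0 : Pb p0) (k0 : Pb q0) {η T : ℝ}
    (hT : ∀ p q : G → ℝ, Pb p → Pb q → T ≤ tau p0 q0 η p q)
    {w : Ω → ℝ} (hw : Pb w) (X Y V S : Ω → G) (hV : ∀ ω, V ω = X ω + Y ω) :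
    T ≤ 2 * (E w (fun ω => (X ω, S ω)) + E w (fun ω => (Y ω, S ω)) - E w S)
      - 3 * E w (fun ω => (X ω, Y ω, S ω)) + 2 * E w (fun ω => (V ω, S ω)) - E w S
      + η * (F p0 w X (fun ω => (V ω, S ω)) + F q0 w Y (fun ω => (V ω, S ω))) := by
  set Z : Ω → G × G := fun ω => (V ω, S ω) with hZ
  set u := cc w Z with hu
  have pu : Pb u := cc_Pb hw Z
  have ef : ∀ {A : Type _} [Fintype A] (f : Ω → A), E u (fun z => f z.1) = E w f := by
    intro A _ f; unfold E; rw [pm_cc_fst hw.1 Z f]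
  have es : ∀ {A : Type _} [Fintype A] (f : Ω → A), E u (fun z => f z.2) = E w f := by
    intro A _ f; unfold E; rw [pm_cc_snd hw.1 Z f]
  have cm := CM h0 k0 hT pu (cc_CI hw Z X Y)
  have supp : ∀ z, u z ≠ 0 → X z.1 + Y z.1 = X z.2 + Y z.2 ∧ S z.1 = S z.2 := by
    intro z hz
    have := cc_supp hz
    simp only [hZ, Prod.mk.injEq, hV] at this
    exact this
  have f1 : F p0 u (fun z => X z.1) (fun z => Z z.1) = F p0 w X Z :=
    F_law p0 (pm_cc_fst hw.1 Z (fun ω => (X ω, Z ω)))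
  have f2 : F q0 u (fun z => Y z.2) (fun z => Z z.1) = F q0 w Y Z := by
    apply F_law q0
    rw [← pm_cc_snd hw.1 Z (fun ω => (Y ω, Z ω))]
    exact pm_congr_ae fun ω hω => by rw [cc_supp hω]
  have e1 : E u (fun z => (X z.1, Z z.1)) = E w (fun ω => (X ω, Y ω, S ω)) := by
    rw [ef (fun ω => (X ω, Z ω))]
    apply E_congr
    intro a b _ _
    simp only [Prod.mk.injEq, hZ, hV]
    grind
  have e2 : E u (fun z => (Y z.2, Z z.1)) = E w (fun ω => (X ω, Y ω, S ω)) := by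
    rw [← es]
    apply E_congr
    intro a b ha hb
    rw [cc_supp ha, cc_supp hb]
    simp only [Prod.mk.injEq, hZ, hV]
    grind
  have e3 : E u (fun z => Z z.1) = E w Z := ef Z
  have s1 := submod pu.1 (fun z => X z.1 + Y z.2) (fun z => V z.1) (fun z => S z.1)
  have e4 : E u (fun z => (V z.1, S z.1)) = E w Z := ef Z
  have e5 : E u (fun z => S z.1) = E w S := ef S
  have s2 := submod pu.1 (fun z => X z.1) (fun z => Y z.1) (fun z => (X z.1 + Y z.2, S z.1))
  have e6 : E u (fun z => (X z.1, Y z.1, X z.1 + Y z.2, S z.1)) =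
      2 * E w (fun ω => (X ω, Y ω, S ω)) - E w Z := by
    have h := (cc_CI hw Z (fun ω => (X ω, Y ω)) (fun ω => (X ω, Y ω))).E_eq pu.1
    have h' : E u (fun z => ((X z.1, Y z.1), Z z.1)) = E w (fun ω => (X ω, Y ω, S ω)) := by
      rw [ef (fun ω => ((X ω, Y ω), Z ω))]
      apply E_congr
      intro a b _ _
      simp only [Prod.mk.injEq, hZ, hV]
      grind
    have h'' : E u (fun z => ((X z.2, Y z.2), Z z.1)) = E w (fun ω => (X ω, Y ω, S ω)) := by
      rw [← es]
      apply E_congr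
      intro a b ha hb
      rw [cc_supp ha, cc_supp hb]
      simp only [Prod.mk.injEq, hZ, hV]
      grind
    have h3 : E u (fun z => (X z.1, Y z.1, X z.1 + Y z.2, S z.1)) =
        E u (fun z => ((X z.1, Y z.1), (X z.2, Y z.2), Z z.1)) := by
      apply E_congr
      intro a b ha hb
      have := supp a ha
      have := supp b hb
      simp only [Prod.mk.injEq, hZ, hV]
      grind
    rw [h3]
    linarith
  have s3 := submod pu.1 (fun z => X z.1) (fun z => Y z.2) (fun z => S z.1)
  have s4 := submod pu.1 (fun z => X z.2) (fun z => Y z.1) (fun z => S z.1)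
  have e7 : E u (fun z => (X z.1, X z.1 + Y z.2, S z.1)) = E u (fun z => (X z.1, Y z.2, S z.1)) := by
    apply E_congr
    intro a b ha hb
    simp only [Prod.mk.injEq]
    grind
  have e8 : E u (fun z => (Y z.1, X z.1 + Y z.2, S z.1)) = E u (fun z => (X z.2, Y z.1, S z.1)) := by
    apply E_congr
    intro a b ha hb
    have c1 : X a.1 + Y a.2 = X a.2 + Y a.1 := by
      linear_combination (supp a ha).1 + h2 (Y a.2) - h2 (Y a.1)
    have c2 : X b.1 + Y b.2 = X b.2 + Y b.1 := by
      linear_combination (supp b hb).1 + h2 (Y b.2) - h2 (Y b.1)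
    simp only [Prod.mk.injEq, c1, c2]
    grind
  have e9 : E u (fun z => (X z.1, S z.1)) = E w (fun ω => (X ω, S ω)) :=
    ef (fun ω => (X ω, S ω))
  have e10 : E u (fun z => (Y z.1, S z.1)) = E w (fun ω => (Y ω, S ω)) :=
    ef (fun ω => (Y ω, S ω))
  have e11 : E u (fun z => (X z.2, S z.1)) = E w (fun ω => (X ω, S ω)) := by
    rw [← es]
    apply E_congr
    intro a b ha hb
    rw [(supp a ha).2, (supp b hb).2]
  have e12 : E u (fun z => (Y z.2, S z.1)) = E w (fun ω => (Y ω, S ω)) := by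
    rw [← es]
    apply E_congr
    intro a b ha hb
    rw [(supp a ha).2, (supp b hb).2]
  rw [f1, f2, e1, e2, e3] at cm
  have s1' : E u (fun z => (X z.1 + Y z.2, Z z.1)) + E w S ≤
      E u (fun z => (X z.1 + Y z.2, S z.1)) + E w Z := by
    rw [← e4, ← e5]; exact s1
  linarith

end bsg

end PF

namespace PF

open Finset

section core
variable {Ω A B C : Type*} [Fintype Ω] [Fintype A] [Fintype B] [Fintype C]
variable {G : Type*} [CommRing G] [Fintype G]

lemma F_unit {p0 : G → ℝ} {w : Ω → ℝ} (hw : Pb w) (X : Ω → G) :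
    F p0 w X (fun _ => ()) = F0 p0 w X := by
  unfold F F0
  rw [E_unit hw.2, E_congr (X := fun ω => (X ω, ())) (Y := X) (by simp),
    E_congr (w := pr w p0) (X := fun z => (z.2 + X z.1, ())) (Y := fun z => z.2 + X z.1) (by simp)]
  ring

lemma CM0 {p0 q0 : G → ℝ} (h0 : Pb p0) (k0 : Pb q0) {η T : ℝ}
    (hT : ∀ p q : G → ℝ, Pb p → Pb q → T ≤ tau p0 q0 η p q)
    {w : Ω → ℝ} (hw : Pb w) {X Y : Ω → G} (h : CI w X Y (fun _ => ())) :
    T ≤ E w (fun ω => X ω + Y ω) - E w X / 2 - E w Y / 2 + η * (F0 p0 w X + F0 q0 w Y) := by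
  have := CM h0 k0 hT hw h
  rw [F_unit hw, F_unit hw, E_unit hw.2,
    E_congr (X := fun ω => (X ω, ())) (Y := X) (by simp),
    E_congr (X := fun ω => (Y ω, ())) (Y := Y) (by simp),
    E_congr (X := fun ω => (X ω + Y ω, ())) (Y := fun ω => X ω + Y ω) (by simp)] at this
  linarith

/-- first coordinate -/
def ca (ω : (G × G) × (G × G)) : G := ω.1.1
/-- second coordinate -/
def cb (ω : (G × G) × (G × G)) : G := ω.1.2
/-- third coordinate -/
def ce (ω : (G × G) × (G × G)) : G := ω.2.1
/-- fourth coordinate -/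
def cd (ω : (G × G) × (G × G)) : G := ω.2.2

/-- regrouping -/
def e1 : ((G × G) × (G × G)) ≃ ((G × G) × (G × G)) where
  toFun ω := ((ω.1.1, ω.2.2), (ω.2.1, ω.1.2))
  invFun ω := ((ω.1.1, ω.2.2), (ω.2.1, ω.1.2))
  left_inv _ := rfl
  right_inv _ := rfl

/-- regrouping -/
def e2 : ((G × G) × (G × G)) ≃ ((G × G) × (G × G)) where
  toFun ω := ((ω.1.1, ω.2.1), (ω.1.2, ω.2.2))
  invFun ω := ((ω.1.1, ω.2.1), (ω.1.2, ω.2.2))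
  left_inv _ := rfl
  right_inv _ := rfl

set_option maxHeartbeats 4000000 in
lemma core (h2 : ∀ x : G, x + x = 0) {p0 q0 : G → ℝ} (h0 : Pb p0) (k0 : Pb q0) {p q : G → ℝ}
    (hp : Pb p) (hq : Pb q)
    (hT : ∀ p' q' : G → ℝ, Pb p' → Pb q' → tau p0 q0 (1 / 9) p q ≤ tau p0 q0 (1 / 9) p' q') :
    dd p q ≤ 0 := by
  obtain ⟨w, hwdef⟩ : ∃ w, w = pr (pr p q) (pr p q) := ⟨_, rfl⟩
  have hpq := hp.pr hq
  have hpp := hp.pr hp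
  have hqq := hq.pr hq
  have hw : Pb w := hwdef ▸ hpq.pr hpq
  have hw1 : (fun ω => pr (pr p q) (pr p q) (e1 ω)) = w := by
    rw [hwdef]; funext ω; simp only [pr, e1, Equiv.coe_fn_mk]; ring
  have hw2 : (fun ω => pr (pr p p) (pr q q) (e2 ω)) = w := by
    rw [hwdef]; funext ω; simp only [pr, e2, Equiv.coe_fn_mk]; ring
  -- transfer principles
  have t0 : ∀ {A : Type _} [Fintype A] (f : (G × G) × (G × G) → A),
      E w f = E (pr (pr p q) (pr p q)) f := by
    intro A _ f; rw [hwdef]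
  have t1 : ∀ {A : Type _} [Fintype A] (f : (G × G) × (G × G) → A),
      E w (fun ω => f (e1 ω)) = E (pr (pr p q) (pr p q)) f := by
    intro A _ f; rw [← E_equiv e1 (pr (pr p q) (pr p q)) f, hw1]
  have t2 : ∀ {A : Type _} [Fintype A] (f : (G × G) × (G × G) → A),
      E w (fun ω => f (e2 ω)) = E (pr (pr p p) (pr q q)) f := by
    intro A _ f; rw [← E_equiv e2 (pr (pr p p) (pr q q)) f, hw2]
  obtain ⟨x1, hx1⟩ : ∃ x, E p (fun x => x) = x := ⟨_, rfl⟩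
  obtain ⟨x2, hx2⟩ : ∃ x, E q (fun x => x) = x := ⟨_, rfl⟩
  obtain ⟨hU, hhU⟩ : ∃ x, E (pr p q) (fun z => z.1 + z.2) = x := ⟨_, rfl⟩
  obtain ⟨hA, hhA⟩ : ∃ x, E (pr p p) (fun z => z.1 + z.2) = x := ⟨_, rfl⟩
  obtain ⟨hB, hhB⟩ : ∃ x, E (pr q q) (fun z => z.1 + z.2) = x := ⟨_, rfl⟩
  have epq : E (pr p q) (fun z => (z.1, z.2)) = x1 + x2 := by
    rw [← hx1, ← hx2]; exact E_pr hp.1 hq.1 hp.2 hq.2 (fun x => x) (fun x => x)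
  have epp : E (pr p p) (fun z => (z.1, z.2)) = x1 + x1 := by
    rw [← hx1]; exact E_pr hp.1 hp.1 hp.2 hp.2 (fun x => x) (fun x => x)
  have eqq : E (pr q q) (fun z => (z.1, z.2)) = x2 + x2 := by
    rw [← hx2]; exact E_pr hq.1 hq.1 hq.2 hq.2 (fun x => x) (fun x => x)
  -- laws of single coordinates
  have la : pm w ca = p := by
    rw [hwdef]
    refine (pm_pr_fst (pr p q) hpq.2 (fun z => z.1)).trans ?_
    exact (pm_pr_fst p hq.2 (fun z => z)).trans (pm_id p)
  have lb : pm w cb = q := by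
    rw [hwdef]
    refine (pm_pr_fst (pr p q) hpq.2 (fun z => z.2)).trans ?_
    exact (pm_pr_snd q hp.2 (fun z => z)).trans (pm_id q)
  have lc : pm w ce = p := by
    rw [hwdef]
    refine (pm_pr_snd (pr p q) hpq.2 (fun z => z.1)).trans ?_
    exact (pm_pr_fst p hq.2 (fun z => z)).trans (pm_id p)
  have ea : E w ca = x1 := by rw [← hx1, E_id]; unfold E; rw [la]
  have eb : E w cb = x2 := by rw [← hx2, E_id]; unfold E; rw [lb]
  have ec : E w ce = x1 := by rw [← hx1, E_id]; unfold E; rw [lc]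
  have ed : E w cd = x2 := by
    rw [← hx2]
    exact (t0 _).trans ((E_pr_snd (pr p q) hpq.2 (fun z => z.2)).trans
      (E_pr_snd q hp.2 (fun z => z)))
  have fa : F0 p0 w ca = F0 p0 p (fun x => x) := F0_law p0 (by rw [la, pm_id])
  have fc : F0 p0 w ce = F0 p0 p (fun x => x) := F0_law p0 (by rw [lc, pm_id])
  have fb : F0 q0 w cb = F0 q0 q (fun x => x) := F0_law q0 (by rw [lb, pm_id])
  -- two-term sums
  have eab : E w (fun ω => ca ω + cb ω) = hU := by
    rw [← hhU]
    exact (t0 _).trans (E_pr_fst (pr p q) hpq.2 (fun z => z.1 + z.2))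
  have ead : E w (fun ω => ca ω + cd ω) = hU := by
    rw [← hhU]
    exact (t1 (fun z => z.1.1 + z.1.2)).trans (E_pr_fst (pr p q) hpq.2 (fun z => z.1 + z.2))
  have ecb : E w (fun ω => ce ω + cb ω) = hU := by
    rw [← hhU]
    exact (t1 (fun z => z.2.1 + z.2.2)).trans (E_pr_snd (pr p q) hpq.2 (fun z => z.1 + z.2))
  have eac : E w (fun ω => ca ω + ce ω) = hA := by
    rw [← hhA]
    exact (t2 (fun z => z.1.1 + z.1.2)).trans (E_pr_fst (pr p p) hqq.2 (fun z => z.1 + z.2))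
  have ebd : E w (fun ω => cb ω + cd ω) = hB := by
    rw [← hhB]
    exact (t2 (fun z => z.2.1 + z.2.2)).trans (E_pr_snd (pr q q) hpp.2 (fun z => z.1 + z.2))
  -- pairs
  have pab : E w (fun ω => (ca ω, cb ω)) = x1 + x2 := by
    rw [← epq]
    exact (t0 _).trans (E_pr_fst (pr p q) hpq.2 (fun z => (z.1, z.2)))
  have pad : E w (fun ω => (ca ω, cd ω)) = x1 + x2 := by
    rw [← epq]
    exact (t1 (fun z => (z.1.1, z.1.2))).trans (E_pr_fst (pr p q) hpq.2 (fun z => (z.1, z.2)))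
  have pcb : E w (fun ω => (ce ω, cb ω)) = x1 + x2 := by
    rw [← epq]
    exact (t1 (fun z => (z.2.1, z.2.2))).trans (E_pr_snd (pr p q) hpq.2 (fun z => (z.1, z.2)))
  have pac : E w (fun ω => (ca ω, ce ω)) = x1 + x1 := by
    rw [← epp]
    exact (t2 (fun z => (z.1.1, z.1.2))).trans (E_pr_fst (pr p p) hqq.2 (fun z => (z.1, z.2)))
  have pbd : E w (fun ω => (cb ω, cd ω)) = x2 + x2 := by
    rw [← eqq]
    exact (t2 (fun z => (z.2.1, z.2.2))).trans (E_pr_snd (pr q q) hpp.2 (fun z => (z.1, z.2)))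
  have pba : E w (fun ω => (cb ω, ca ω)) = x2 + x1 := by
    rw [add_comm, ← pab]; apply E_congr; intro u v _ _; simp only [Prod.mk.injEq]; tauto
  have pbc : E w (fun ω => (cb ω, ce ω)) = x2 + x1 := by
    rw [add_comm, ← pcb]; apply E_congr; intro u v _ _; simp only [Prod.mk.injEq]; tauto
  -- independent blocks
  have qU : E w (fun ω => (ca ω + cb ω, ce ω + cd ω)) = hU + hU := by
    rw [← hhU]
    exact (t0 _).trans
      (E_pr hpq.1 hpq.1 hpq.2 hpq.2 (fun z => z.1 + z.2) (fun z => z.1 + z.2))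
  have qV : E w (fun ω => (ca ω + cd ω, ce ω + cb ω)) = hU + hU := by
    rw [← hhU]
    exact (t1 (fun z => (z.1.1 + z.1.2, z.2.1 + z.2.2))).trans
      (E_pr hpq.1 hpq.1 hpq.2 hpq.2 (fun z => z.1 + z.2) (fun z => z.1 + z.2))
  have qW : E w (fun ω => (ca ω + ce ω, cb ω + cd ω)) = hA + hB := by
    rw [← hhA, ← hhB]
    exact (t2 (fun z => (z.1.1 + z.1.2, z.2.1 + z.2.2))).trans
      (E_pr hpp.1 hqq.1 hpp.2 hqq.2 (fun z => z.1 + z.2) (fun z => z.1 + z.2))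
  have r1 : E w (fun ω => ((ca ω, cd ω), ce ω + cb ω)) = x1 + x2 + hU := by
    rw [← hhU, ← epq]
    exact (t1 (fun z => ((z.1.1, z.1.2), z.2.1 + z.2.2))).trans
      (E_pr hpq.1 hpq.1 hpq.2 hpq.2 (fun z => (z.1, z.2)) (fun z => z.1 + z.2))
  have r2 : E w (fun ω => (ca ω + cd ω, (ce ω, cb ω))) = hU + (x1 + x2) := by
    rw [← hhU, ← epq]
    exact (t1 (fun z => (z.1.1 + z.1.2, (z.2.1, z.2.2)))).trans
      (E_pr hpq.1 hpq.1 hpq.2 hpq.2 (fun z => z.1 + z.2) (fun z => (z.1, z.2)))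
  have r3 : E w (fun ω => ((ca ω, ce ω), cb ω + cd ω)) = x1 + x1 + hB := by
    rw [← hhB, ← epp]
    exact (t2 (fun z => ((z.1.1, z.1.2), z.2.1 + z.2.2))).trans
      (E_pr hpp.1 hqq.1 hpp.2 hqq.2 (fun z => (z.1, z.2)) (fun z => z.1 + z.2))
  have r4 : E w (fun ω => (ca ω + ce ω, (cb ω, cd ω))) = hA + (x2 + x2) := by
    rw [← hhA, ← eqq]
    exact (t2 (fun z => (z.1.1 + z.1.2, (z.2.1, z.2.2)))).trans
      (E_pr hpp.1 hqq.1 hpp.2 hqq.2 (fun z => z.1 + z.2) (fun z => (z.1, z.2)))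
  -- conditional independence
  have i1 : CI w (fun ω => ca ω + cd ω) (fun ω => ce ω + cb ω) (fun _ => ()) := by
    have := CI_equiv e1 (CI_pr_unit (pr p q) (pr p q) (fun z => z.1 + z.2) (fun z => z.1 + z.2))
    rw [hw1] at this; exact this
  have i2 : CI w ca cb (fun ω => (ca ω + cd ω, ce ω + cb ω)) := by
    have := CI_equiv e1 (CI_pr (pr p q) (pr p q) (fun z => z.1) (fun z => z.2)
      (fun z => z.1 + z.2) (fun z => z.1 + z.2))
    rw [hw1] at this; exact this
  have i3 : CI w (fun ω => ca ω + ce ω) (fun ω => cb ω + cd ω) (fun _ => ()) := by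
    have := CI_equiv e2 (CI_pr_unit (pr p p) (pr q q) (fun z => z.1 + z.2) (fun z => z.1 + z.2))
    rw [hw2] at this; exact this
  have i4 : CI w ca cb (fun ω => (ca ω + ce ω, cb ω + cd ω)) := by
    have := CI_equiv e2 (CI_pr (pr p p) (pr q q) (fun z => z.1) (fun z => z.1)
      (fun z => z.1 + z.2) (fun z => z.1 + z.2))
    rw [hw2] at this; exact this
  -- the four-fold sum
  obtain ⟨S, hS⟩ : ∃ S : (G × G) × (G × G) → G, ∀ ω, S ω = ca ω + cb ω + ce ω + cd ω :=
    ⟨_, fun _ => rfl⟩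
  obtain ⟨U, hUd⟩ : ∃ S : (G × G) × (G × G) → G, S = fun ω => ca ω + cb ω := ⟨_, rfl⟩
  obtain ⟨V, hVd⟩ : ∃ S : (G × G) × (G × G) → G, S = fun ω => ce ω + cb ω := ⟨_, rfl⟩
  obtain ⟨W, hWd⟩ : ∃ S : (G × G) × (G × G) → G, S = fun ω => ca ω + ce ω := ⟨_, rfl⟩
  obtain ⟨m, hm⟩ : ∃ x, E w (fun ω => (U ω, V ω, S ω)) = x := ⟨_, rfl⟩
  have key : ∀ ω, U ω + V ω = W ω := fun ω => by
    rw [hUd, hVd, hWd]; linear_combination h2 (cb ω)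
  have key2 : ∀ ω, V ω + W ω = U ω := fun ω => by
    rw [hUd, hVd, hWd]; linear_combination h2 (ce ω)
  have key3 : ∀ ω, W ω + U ω = V ω := fun ω => by
    rw [hUd, hVd, hWd]; linear_combination h2 (ca ω)
  have m2 : E w (fun ω => (V ω, W ω, S ω)) = m := by
    rw [← hm]; apply E_congr; intro u v _ _; simp only [Prod.mk.injEq, ← key2]; grind
  have m3 : E w (fun ω => (W ω, U ω, S ω)) = m := by
    rw [← hm]; apply E_congr; intro u v _ _; simp only [Prod.mk.injEq, ← key3]; grind
  have sU : E w (fun ω => (U ω, S ω)) = hU + hU := by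
    rw [← qU, hUd]; apply E_congr; intro u v _ _; simp only [Prod.mk.injEq, hS]; grind
  have sV : E w (fun ω => (V ω, S ω)) = hU + hU := by
    rw [← qV, hVd]; apply E_congr; intro u v _ _; simp only [Prod.mk.injEq, hS]; grind
  have sW : E w (fun ω => (W ω, S ω)) = hA + hB := by
    rw [← qW, hWd]; apply E_congr; intro u v _ _; simp only [Prod.mk.injEq, hS]; grind
  -- bounds on the linear functionals
  have fU1 := F0_add h0 hw (X := ca) (Y := cb) (by rw [pab, ea, eb])
  have fU2 := F0_add k0 hw (X := cb) (Y := ca) (by rw [pba, ea, eb])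
  have fV1 := F0_add h0 hw (X := ce) (Y := cb) (by rw [pcb, ec, eb])
  have fV2 := F0_add k0 hw (X := cb) (Y := ce) (by rw [pbc, ec, eb])
  have fD1 := F0_add h0 hw (X := ca) (Y := cd) (by rw [pad, ea, ed])
  have fW1 := F0_add h0 hw (X := ca) (Y := ce) (by rw [pac, ea, ec])
  have fW2 := F0_add k0 hw (X := cb) (Y := cd) (by rw [pbd, eb, ed])
  have cba : (fun ω : (G × G) × (G × G) => cb ω + ca ω) = fun ω => ca ω + cb ω := by
    funext ω; ring
  have cbc : (fun ω : (G × G) × (G × G) => cb ω + ce ω) = fun ω => ce ω + cb ω := by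
    funext ω; ring
  rw [cba] at fU2
  rw [cbc] at fV2
  rw [fa, ea, eab] at fU1
  rw [fb, eb, eab] at fU2
  rw [fc, ec, ecb] at fV1
  rw [fb, eb, ecb] at fV2
  rw [fa, ea, ead] at fD1
  rw [fa, ea, eac] at fW1
  rw [fb, eb, ebd] at fW2
  -- use 1
  have u1 := CM0 h0 k0 hT hw i1
  have eS1 : E w (fun ω => ca ω + cd ω + (ce ω + cb ω)) = E w S := by
    congr 1; funext ω; rw [hS]; ring
  rw [eS1, ead, ecb] at u1
  -- use 2
  have u2 := CM h0 k0 hT hw i2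
  have a1 : E w (fun ω => (ca ω, ca ω + cd ω, ce ω + cb ω)) = x1 + x2 + hU := by
    rw [← r1]; apply E_congr; intro u v _ _; simp only [Prod.mk.injEq]; grind
  have a2 : E w (fun ω => (cb ω, ca ω + cd ω, ce ω + cb ω)) = hU + (x1 + x2) := by
    rw [← r2]; apply E_congr; intro u v _ _; simp only [Prod.mk.injEq]; grind
  have a3 : E w (fun ω => (ca ω + cb ω, ca ω + cd ω, ce ω + cb ω)) = m := by
    rw [← hm, hUd, hVd]; apply E_congr; intro u v _ _; simp only [Prod.mk.injEq, hS]; grind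
  have g1 := F_le h0 hw ca (fun ω => (ca ω + cd ω, ce ω + cb ω))
  have g2 := F_le k0 hw cb (fun ω => (ca ω + cd ω, ce ω + cb ω))
  rw [a1, qV, fa, ea] at g1
  rw [a2, qV, fb, eb] at g2
  rw [a1, a2, a3, qV] at u2
  -- use 3
  have u3 := CM0 h0 k0 hT hw i3
  have eS3 : E w (fun ω => ca ω + ce ω + (cb ω + cd ω)) = E w S := by
    congr 1; funext ω; rw [hS]; ring
  rw [eS3, eac, ebd] at u3
  -- use 4
  have u4 := CM h0 k0 hT hw i4
  have b1 : E w (fun ω => (ca ω, ca ω + ce ω, cb ω + cd ω)) = x1 + x1 + hB := by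
    rw [← r3]; apply E_congr; intro u v _ _; simp only [Prod.mk.injEq]; grind
  have b2 : E w (fun ω => (cb ω, ca ω + ce ω, cb ω + cd ω)) = hA + (x2 + x2) := by
    rw [← r4]; apply E_congr; intro u v _ _; simp only [Prod.mk.injEq]; grind
  have b3 : E w (fun ω => (ca ω + cb ω, ca ω + ce ω, cb ω + cd ω)) = m := by
    rw [← m3, hUd, hWd]; apply E_congr; intro u v _ _; simp only [Prod.mk.injEq, hS]; grind
  have g3 := F_le h0 hw ca (fun ω => (ca ω + ce ω, cb ω + cd ω))
  have g4 := F_le k0 hw cb (fun ω => (ca ω + ce ω, cb ω + cd ω))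
  rw [b1, qW, fa, ea] at g3
  rw [b2, qW, fb, eb] at g4
  rw [b1, b2, b3, qW] at u4
  -- endgame
  have v1 := endgame h2 h0 k0 hT hw U V W S (fun ω => (key ω).symm)
  have v2 := endgame h2 h0 k0 hT hw V W U S (fun ω => (key2 ω).symm)
  have v3 := endgame h2 h0 k0 hT hw W U V S (fun ω => (key3 ω).symm)
  rw [sU, sV, sW, hm] at v1
  rw [sU, sV, sW, m2] at v2
  rw [sU, sV, sW, m3] at v3
  have c1 : E w (fun ω => (U ω, W ω, S ω)) = m := by
    rw [← hm]; apply E_congr; intro u v _ _; simp only [Prod.mk.injEq, ← key]; grind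
  have c2 : E w (fun ω => (V ω, W ω, S ω)) = m := m2
  have c3 : E w (fun ω => (V ω, U ω, S ω)) = m := by
    rw [← hm]; apply E_congr; intro u v _ _; simp only [Prod.mk.injEq]; tauto
  have c4 : E w (fun ω => (cb ω + cd ω, U ω, S ω)) = m := by
    rw [← m3, hWd]; apply E_congr; intro u v _ _; simp only [Prod.mk.injEq, hS]; grind
  have c5 : E w (fun ω => (W ω, V ω, S ω)) = m := by
    rw [← m2]; apply E_congr; intro u v _ _; simp only [Prod.mk.injEq]; tauto
  have c6 : E w (fun ω => (U ω, V ω, S ω)) = m := hm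
  have tr : F q0 w W (fun ω => (U ω, S ω)) = F q0 w (fun ω => cb ω + cd ω) (fun ω => (U ω, S ω)) := by
    refine F_trans q0 w (fun z => z.2) (fun ω => ?_)
    simp only [hS, hWd]
    linear_combination -h2 (cb ω) - h2 (cd ω)
  have w1 := F_le h0 hw U (fun ω => (W ω, S ω))
  have w2 := F_le k0 hw V (fun ω => (W ω, S ω))
  have w3 := F_le h0 hw V (fun ω => (U ω, S ω))
  have w4 := F_le k0 hw (fun ω => cb ω + cd ω) (fun ω => (U ω, S ω))
  have w5 := F_le h0 hw W (fun ω => (V ω, S ω))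
  have w6 := F_le k0 hw U (fun ω => (V ω, S ω))
  rw [← hUd] at fU1 fU2 eab
  rw [← hVd] at fV1 fV2 ecb
  rw [← hWd] at fW1 eac
  rw [c1, sW, eab] at w1
  rw [c2, sW, ecb] at w2
  rw [c3, sU, ecb] at w3
  rw [c4, sU, ebd] at w4
  rw [c5, sV, eac] at w5
  rw [c6, sV, eab] at w6
  rw [tr] at v2
  rw [← hVd] at u1
  rw [← hWd] at u3
  unfold tau dd at u1 u2 u3 u4 v1 v2 v3
  rw [hhU, hx1, hx2] at u1 u2 u3 u4 v1 v2 v3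
  unfold dd
  rw [hhU, hx1, hx2]
  linarith

end core

end PF

namespace PF

open Finset

section fin
variable {Ω A B C : Type*} [Fintype Ω] [Fintype A] [Fintype B] [Fintype C]
variable {G : Type*} [CommRing G] [Fintype G]

/-- entropy of the sum of independent variables -/
def hs (p q : G → ℝ) : ℝ := E (pr p q) (fun z => z.1 + z.2)

lemma hs_comm (p q : G → ℝ) : hs p q = hs q p := by
  unfold hs
  rw [← E_equiv (Equiv.prodComm G G) (pr q p)]
  congr 1
  · funext z; simp [pr, mul_comm]
  · funext z; simp [add_comm]

lemma F0_hs (p0 p : G → ℝ) : F0 p0 p (fun x => x) = hs p0 p - E p (fun x => x) / 2 := by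
  rw [hs_comm]
  unfold F0 hs
  congr 2
  funext z; ring

lemma E_shear {p q : G → ℝ} (hp : Pb p) (hq : Pb q) :
    E (pr p q) (fun z => (z.1 + z.2, z.2)) = E p (fun x => x) + E q (fun x => x) := by
  rw [← E_pr hp.1 hq.1 hp.2 hq.2 (fun x => x) (fun x => x)]
  apply E_congr; intro u v _ _; simp only [Prod.mk.injEq]; grind

lemma hs_ge {p q : G → ℝ} (hp : Pb p) (hq : Pb q) : E p (fun x => x) ≤ hs p q := by
  have h := subadd (hp.pr hq).1 (hp.pr hq).2 (fun z => z.1 + z.2) (fun z => z.2)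
  rw [E_shear hp hq, E_pr_snd q hp.2 (fun x => x)] at h
  unfold hs
  linarith

lemma hs_ge2 {p q : G → ℝ} (hp : Pb p) (hq : Pb q) : E q (fun x => x) ≤ hs p q :=
  hs_comm p q ▸ hs_ge hq hp

lemma hs_le {p q : G → ℝ} (hp : Pb p) (hq : Pb q) :
    hs p q ≤ E p (fun x => x) + E q (fun x => x) := by
  rw [← E_shear hp hq]
  exact E_mono (hp.pr hq).1 (by intro u v; simp only [Prod.mk.injEq]; tauto)

lemma E_nonneg {w : Ω → ℝ} (hw : Pb w) (X : Ω → A) : 0 ≤ E w X := by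
  rw [← E_unit hw.2]
  exact E_mono hw.1 (by simp)

lemma hs_tri {p q r : G → ℝ} (hp : Pb p) (hq : Pb q) (hr : Pb r) :
    hs p r ≤ hs p q + hs q r - E q (fun x => x) := by
  have h1 := KV hp (hq.pr hr) (X := fun z => z.1) (Y := fun z => z.2) (by
    rw [E_pr hq.1 hr.1 hq.2 hr.2 (fun x => x) (fun x => x), E_pr_fst q hr.2 (fun x => x),
      E_pr_snd r hq.2 (fun x => x)])
  rw [E_pr_fst q hr.2 (fun x => x)] at h1
  have h2 := E_pm_pr (pr q r) (fun z => z.1) p (fun z => z.2 + z.1)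
  rw [pm_pr_fst q hr.2 (fun x => x), pm_id] at h2
  rw [← h2] at h1
  have h3 : E (pr q p) (fun z => z.2 + z.1) = hs p q := by
    rw [hs_comm]; unfold hs; congr 1; funext z; ring
  rw [h3] at h1
  have hP : Pb (pm (pr r p) (fun z => z.1 + z.2)) :=
    ⟨pm_nonneg (hr.pr hp).1 _, by rw [sum_pm_one, (hr.pr hp).2]⟩
  have h4 := hs_ge hP hq
  unfold hs at h4
  rw [E_pm_pr, E_pm] at h4
  let e : (G × G) × G ≃ (G × G) × G :=
    { toFun := fun z => ((z.1.2, z.2), z.1.1)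
      invFun := fun z => ((z.2, z.1.1), z.1.2)
      left_inv := fun _ => rfl
      right_inv := fun _ => rfl }
  have h5 := E_equiv e (pr (pr r p) q) (fun z => z.1.1 + z.1.2 + z.2)
  have h6 : (fun ω => pr (pr r p) q (e ω)) = pr (pr q r) p := by
    funext ω; simp only [pr, e, Equiv.coe_fn_mk]; ring
  have h7 : (fun ω : (G × G) × G => (e ω).1.1 + (e ω).1.2 + (e ω).2) =
      fun z => z.2 + (z.1.1 + z.1.2) := by
    funext ω; simp only [e, Equiv.coe_fn_mk]; ring
  rw [h6, h7] at h5
  rw [hs_comm p r]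
  unfold hs at *
  linarith

lemma stab {p q : G → ℝ} (hp : Pb p) (hq : Pb q) (hd : dd p q ≤ 0) {y : G}
    (hy : q y ≠ 0) (s : G) : p (s - y) = pm (pr p q) (fun z => z.1 + z.2) s := by
  classical
  have a1 := hs_ge hp hq
  have a2 := hs_ge2 hp hq
  unfold dd at hd
  unfold hs at a1 a2
  have hc : CI (pr p q) (fun z => z.1 + z.2) (fun z => z.2) (fun _ => ()) := by
    apply CI_of_eq (hp.pr hq).1
    rw [E_unit (hp.pr hq).2,
      E_congr (X := fun z : G × G => (z.1 + z.2, z.2, ())) (Y := fun z => (z.1 + z.2, z.2))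
        (by simp),
      E_congr (X := fun z : G × G => (z.1 + z.2, ())) (Y := fun z => (z.1 + z.2)) (by simp),
      E_congr (X := fun z : G × G => (z.2, ())) (Y := fun z => z.2) (by simp),
      E_shear hp hq, E_pr_snd q hp.2 (fun x => x)]
    linarith
  have h := hc s y ()
  have e1 : pm (pr p q) (fun z => (z.1 + z.2, z.2, ())) (s, y, ()) = p (s - y) * q y := by
    unfold pm
    rw [Finset.sum_eq_single (s - y, y)]
    · simp [pr]
    · rintro ⟨a, b⟩ _ hne
      rw [if_neg]
      simp only [Prod.mk.injEq] at hne ⊢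
      grind
    · simp
  have e2 : pm (pr p q) (fun _ => ()) () = 1 := by
    simp [pm, (hp.pr hq).2]
  have e3 : pm (pr p q) (fun z => (z.1 + z.2, ())) (s, ()) =
      pm (pr p q) (fun z => z.1 + z.2) s := by simp [pm]
  have e4 : pm (pr p q) (fun z => (z.2, ())) (y, ()) = q y := by
    have : pm (pr p q) (fun z => (z.2, ())) (y, ()) = pm (pr p q) (fun z => z.2) y := by
      simp [pm]
    rw [this, pm_pr_snd q hp.2 (fun x => x), pm_id]
  rw [e1, e2, e3, e4, mul_one] at h
  exact mul_right_cancel₀ hy h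

lemma proj {p q : G → ℝ} (hp : Pb p) (hq : Pb q) (f : G → A)
    (hf : ∀ x x' y y', q y ≠ 0 → q y' ≠ 0 → x + y = x' + y' → f x = f x') :
    E p f ≤ hs p q - E q (fun x => x) := by
  have h := submod (hp.pr hq).1 (fun z => z.1 + z.2) (fun z => z.1) (fun z => f z.1)
  rw [E_pr_fst p hq.2 f, E_pr_fst p hq.2 (fun x => (x, f x)),
    E_congr (w := p) (X := fun x => (x, f x)) (Y := fun x => x) (by
      intro u v _ _; simp only [Prod.mk.injEq]; grind),
    E_congr (X := fun z : G × G => (z.1 + z.2, z.1, f z.1)) (Y := fun z => (z.1 + z.2, z.2)) (by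
      intro u v _ _; simp only [Prod.mk.injEq]; grind),
    E_shear hp hq,
    E_congr (X := fun z : G × G => (z.1 + z.2, f z.1)) (Y := fun z => z.1 + z.2) (by
      intro u v hu hv; simp only [Prod.mk.injEq, and_iff_left_iff_imp]
      exact hf _ _ _ _ (right_ne_zero_of_mul hu) (right_ne_zero_of_mul hv))] at h
  unfold hs
  linarith

lemma cont_E {T : Type*} [TopologicalSpace T] {g : T → Ω → ℝ} (hg : ∀ ω, Continuous fun t => g t ω)
    (X : Ω → A) : Continuous fun t => E (g t) X := by
  classical
  unfold E pm
  refine continuous_finsetSum _ fun a _ => continuous_negMulLog.comp ?_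
  refine continuous_finsetSum _ fun ω _ => ?_
  split_ifs
  · exact hg ω
  · exact continuous_const

lemma exists_min {p0 q0 : G → ℝ} (h0 : Pb p0) (k0 : Pb q0) (η : ℝ) :
    ∃ p q : G → ℝ, Pb p ∧ Pb q ∧
      ∀ p' q' : G → ℝ, Pb p' → Pb q' → tau p0 q0 η p q ≤ tau p0 q0 η p' q' := by
  have hc : Continuous fun t : (G → ℝ) × (G → ℝ) => tau p0 q0 η t.1 t.2 := by
    unfold tau dd F0
    have c1 := cont_E (g := fun t : (G → ℝ) × (G → ℝ) => pr t.1 t.2)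
      (fun ω => by unfold pr; fun_prop) (fun z => z.1 + z.2)
    have c2 := cont_E (g := fun t : (G → ℝ) × (G → ℝ) => t.1)
      (fun ω => by fun_prop) (fun z => z)
    have c3 := cont_E (g := fun t : (G → ℝ) × (G → ℝ) => t.2)
      (fun ω => by fun_prop) (fun z => z)
    have c4 := cont_E (g := fun t : (G → ℝ) × (G → ℝ) => pr t.1 p0)
      (fun ω => by unfold pr; fun_prop) (fun z => z.2 + z.1)
    have c5 := cont_E (g := fun t : (G → ℝ) × (G → ℝ) => pr t.2 q0)
      (fun ω => by unfold pr; fun_prop) (fun z => z.2 + z.1)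
    fun_prop
  obtain ⟨t, ht, hm⟩ := ((isCompact_stdSimplex ℝ G).prod (isCompact_stdSimplex ℝ G)).exists_isMinOn
    ⟨(p0, q0), ⟨h0.1, h0.2⟩, ⟨k0.1, k0.2⟩⟩ hc.continuousOn
  refine ⟨t.1, t.2, ⟨ht.1.1, ht.1.2⟩, ⟨ht.2.1, ht.2.2⟩, fun p' q' hp hq => ?_⟩
  exact hm (a := (p', q')) ⟨⟨hp.1, hp.2⟩, ⟨hq.1, hq.2⟩⟩

end fin

section vec
variable {n : ℕ}

/-- the stabiliser of a weight -/
def stb (p : Fvec n → ℝ) : Submodule (ZMod 2) (Fvec n) where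
  carrier := {v | ∀ x, p (x + v) = p x}
  add_mem' := by
    intro a b ha hb x
    rw [← add_assoc, hb, ha]
  zero_mem' := by intro x; simp
  smul_mem' := by
    intro c v hv x
    have : c = 0 ∨ c = 1 := by revert c; decide
    rcases this with h | h
    · simp [h]
    · simpa [h] using hv x

lemma mem_stb {p : Fvec n → ℝ} {v : Fvec n} : v ∈ stb p ↔ ∀ x, p (x + v) = p x := Iff.rfl

lemma two_zero (x : Fvec n) : x + x = 0 := by
  funext i
  have : ∀ c : ZMod 2, c + c = 0 := by decide
  exact this _

lemma stb_of {p q : Fvec n → ℝ} (hp : Pb p) (hq : Pb q) (hd : dd p q ≤ 0) {y y' : Fvec n}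
    (hy : q y ≠ 0) (hy' : q y' ≠ 0) : y - y' ∈ stb p := by
  rw [mem_stb]
  intro x
  have h1 := stab hp hq hd hy (x + y)
  have h2 := stab hp hq hd hy' (x + y)
  rw [← h1] at h2
  rw [add_sub_cancel_right] at h2
  rw [← h2]
  congr 1
  ring

lemma exists_supp {p : Fvec n → ℝ} (hp : Pb p) : ∃ x, p x ≠ 0 := by
  by_contra! h
  have := hp.2
  simp [h] at this

lemma stb_le {p q : Fvec n → ℝ} (hp : Pb p) (h : ∀ y y', p y ≠ 0 → p y' ≠ 0 → y - y' ∈ stb q) :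
    stb p ≤ stb q := by
  intro v hv
  obtain ⟨x, hx⟩ := exists_supp hp
  have := h (x + v) x (by rw [mem_stb.1 hv]; exact hx) hx
  simpa using this

lemma log_card_le {p : Fvec n → ℝ} (hp : Pb p) :
    log (Nat.card (stb p)) ≤ E p (fun x => x) := by
  classical
  have hpos : (0 : ℝ) < Nat.card (stb p) := by exact_mod_cast Nat.card_pos
  have hb : ∀ x, p x * Nat.card (stb p) ≤ 1 := by
    intro x
    have h1 : ∑ v : stb p, p (x + v) = p x * Nat.card (stb p) := by
      rw [Finset.sum_congr rfl fun v _ => mem_stb.1 v.2 x]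
      simp [mul_comm]
    rw [← h1, ← hp.2]
    rw [← Finset.sum_image (s := univ) (g := fun v : stb p => x + v.1) (f := p)
      (by intro a _ b _ hab; simpa using hab)]
    exact Finset.sum_le_sum_of_subset_of_nonneg (Finset.subset_univ _) fun i _ _ => hp.1 i
  rw [E_id]
  have : ∑ x, p x * log (Nat.card (stb p)) = log (Nat.card (stb p)) := by
    rw [← Finset.sum_mul, hp.2, one_mul]
  rw [← this]
  refine Finset.sum_le_sum fun x _ => ?_
  rcases (hp.1 x).eq_or_lt with h | h
  · simp [← h]
  · have h3 := Real.log_nonpos (by positivity) (hb x)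
    rw [Real.log_mul h.ne' hpos.ne'] at h3
    unfold negMulLog
    nlinarith

lemma ent_unif (V : Submodule (ZMod 2) (Fvec n)) :
    ent (unifOn (V : Set (Fvec n))) = log (Nat.card V) := by
  classical
  have hpos : (0 : ℝ) < Nat.card V := by exact_mod_cast Nat.card_pos
  unfold ent unifOn
  rw [finsum_eq_sum_of_fintype]
  have : ∀ a : Fvec n, negMulLog ((V : Set (Fvec n)).indicator
      (fun _ => ((Nat.card (V : Set (Fvec n)) : ℝ))⁻¹) a) =
      if a ∈ V then (Nat.card V : ℝ)⁻¹ * log (Nat.card V) else 0 := by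
    intro a
    by_cases h : a ∈ V
    · simp [h, negMulLog]
    · simp [h]
  rw [Finset.sum_congr rfl fun a _ => this a, ← Finset.sum_filter, Finset.sum_const, nsmul_eq_mul]
  have hc : ((univ.filter fun a => a ∈ V).card : ℝ) = Nat.card V := by
    rw [Nat.card_eq_fintype_card, Fintype.card_subtype]
  rw [hc, ← mul_assoc, mul_inv_cancel₀ hpos.ne', one_mul]

lemma ent_eq {A : Type*} [Fintype A] (p : A → ℝ) : ent p = E p (fun x => x) := by
  rw [E_id, ent, finsum_eq_sum_of_fintype]

lemma push_eq {A B : Type*} [Fintype A] (f : A → B) (p : A → ℝ) : push f p = pm p f := by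
  classical
  funext b
  unfold push pm
  rw [finsum_mem_eq_finite_toFinset_sum _ (Set.toFinite _), ← Finset.sum_filter]
  apply Finset.sum_congr _ fun _ _ => rfl
  ext a; simp

lemma conv_eq {G : Type*} [CommRing G] [Fintype G] (p q : G → ℝ) :
    conv p q = pm (pr p q) (fun z => z.1 + z.2) := by
  classical
  funext s
  unfold conv pm pr
  rw [finsum_eq_sum_of_fintype, Fintype.sum_prod_type]
  refine Finset.sum_congr rfl fun x _ => ?_
  rw [Finset.sum_eq_single (s - x)]
  · simp
  · intro b _ hb
    rw [if_neg]
    simp only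
    grind
  · simp

lemma Pb_of {A : Type*} [Fintype A] {p : A → ℝ} (h : IsDist p) : Pb p :=
  ⟨h.1, by rw [← finsum_eq_sum_of_fintype]; exact h.2⟩

lemma ent_push {A B : Type*} [Fintype A] [Fintype B] (f : A → B) (p : A → ℝ) :
    ent (push f p) = E p f := by
  rw [push_eq, ent_eq, E_pm]

end vec

end PF

/-- For finitely supported `X, Y` on `𝔽₂ⁿ` there is a subspace `V` with
`H[𝐔_V] ≤ 7(H[X]+H[Y])` and `max{H[π_V(X)], H[π_V(Y)]} ≤ 12 d[X ; Y]`. -/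
theorem statement6 (n : ℕ) (p q : Fvec n → ℝ) (hp : IsDist p) (hq : IsDist q) :
    ∃ V : Submodule (ZMod 2) (Fvec n),
      ent (unifOn (V : Set (Fvec n))) ≤ 7 * (ent p + ent q) ∧
      max (ent (push V.mkQ p)) (ent (push V.mkQ q)) ≤ 12 * dRuzsa p q := by
  classical
  have h0 := PF.Pb_of hp
  have k0 := PF.Pb_of hq
  obtain ⟨p1, q1, h1, k1, hm⟩ := PF.exists_min h0 k0 (1 / 9)
  have hd := PF.core PF.two_zero h0 k0 h1 k1 hm
  have hd' : PF.dd q1 p1 ≤ 0 := by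
    have := PF.hs_comm q1 p1
    unfold PF.hs at this
    unfold PF.dd at hd ⊢
    linarith
  have s1 : ∀ y y', q1 y ≠ 0 → q1 y' ≠ 0 → y - y' ∈ PF.stb p1 :=
    fun y y' hy hy' => PF.stb_of h1 k1 hd hy hy'
  have s2 : ∀ y y', p1 y ≠ 0 → p1 y' ≠ 0 → y - y' ∈ PF.stb q1 :=
    fun y y' hy hy' => PF.stb_of k1 h1 hd' hy hy'
  have hV : PF.stb p1 = PF.stb q1 := le_antisymm (PF.stb_le h1 s2) (PF.stb_le k1 s1)
  have hcard := PF.log_card_le h1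
  have conv_hs : ent (conv p q) = PF.hs p q := by
    rw [PF.conv_eq, PF.ent_eq, PF.E_pm]; rfl
  haveI : Fintype (Fvec n ⧸ PF.stb p1) := Fintype.ofFinite _
  have mkf : ∀ r : Fvec n → ℝ, (∀ y y', r y ≠ 0 → r y' ≠ 0 → y - y' ∈ PF.stb p1) →
      ∀ x x' y y', r y ≠ 0 → r y' ≠ 0 → x + y = x' + y' →
        (PF.stb p1).mkQ x = (PF.stb p1).mkQ x' := by
    intro r hr x x' y y' hy hy' hxy
    simp only [Submodule.mkQ_apply]
    rw [Submodule.Quotient.eq]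
    have := hr y' y hy' hy
    have e : x - x' = y' - y := by linear_combination hxy
    rwa [e]
  have j1 := PF.proj h0 h1 (PF.stb p1).mkQ (mkf p1 (hV ▸ s2))
  have j2 := PF.proj k0 k1 (PF.stb p1).mkQ (mkf q1 s1)
  have m := hm q p k0 h0
  unfold PF.tau at m
  rw [PF.F0_hs, PF.F0_hs, PF.F0_hs, PF.F0_hs] at m
  have ddhs : ∀ u v : Fvec n → ℝ, PF.dd u v =
    PF.hs u v - PF.E u (fun x => x) / 2 - PF.E v (fun x => x) / 2 := fun _ _ => rfl
  rw [ddhs] at m hd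
  rw [ddhs, PF.hs_comm q p] at m
  have t1 := PF.hs_tri h0 k0 h1
  have t2 := PF.hs_tri k0 k1 h1
  have t3 := PF.hs_tri k0 h0 k1
  have t4 := PF.hs_tri h0 h1 k1
  rw [PF.hs_comm q1 p1] at t2
  rw [PF.hs_comm q p] at t3
  have g1 := PF.hs_ge h1 k1
  have g2 := PF.hs_ge2 h1 k1
  have g3 := PF.hs_ge h0 h1
  have g4 := PF.hs_ge k0 k1
  have g5 := PF.hs_le h0 k0
  have g6 := PF.hs_ge2 h0 h1
  have g7 := PF.hs_ge2 k0 k1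
  have n1 := PF.E_nonneg h0 (fun x => x)
  have n2 := PF.E_nonneg k0 (fun x => x)
  refine ⟨PF.stb p1, ?_, max_le ?_ ?_⟩
  · rw [PF.ent_unif, PF.ent_eq p, PF.ent_eq q]
    linarith
  · rw [PF.ent_push, dRuzsa, conv_hs, PF.ent_eq p, PF.ent_eq q]
    linarith
  · rw [PF.ent_push, dRuzsa, conv_hs, PF.ent_eq p, PF.ent_eq q]
    linarith
end
end

section
/- (Endgame Lemma) Let η ∈ (0, 1/2] and κ > 0. Let X, Y be independent finitely supported random variables on G = 𝔽₂ⁿ with s[X; Y] ≥ η (H[X] + H[Y]). Let X₁, X₂ and Y₁, Y₂ be mutually independent copies of X and Y, and suppose: (i) s[X₁ + X₂; Y₁ + Y₂] ≤ η (H[X₁ + X₂] + H[Y₁ + Y₂]) + κ; (ii) s[X₁ + Y₂; X₂ + Y₁] ≤ η (H[X₁ + Y₂] + H[X₂ + Y₁]) + κ; (iii) s[X₁ | X₁ + X₂; Y₁ | Y₁ + Y₂] ≤ η (H[X₁ | X₁ + X₂] + H[Y₁ | Y₁ + Y₂]) + κ; (iv) s[X₁ | X₁ + Y₂; Y₁ |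 Y₁ + X₂] ≤ η (H[X₁ | X₁ + Y₂] + H[Y₁ | Y₁ + X₂]) + κ. For (u, w) in supp(X₁ + Y₂) × supp(Y₁ + X₂), let X_u = (X₁ | X₁ + Y₂ = u) and Y_w = (Y₁ | Y₁ + X₂ = w). Then for each (u, w) there is a subspace V(u, w) ⊆ G such that H[𝐔_{V(u,w)}] ≤ 7 (H[X_u] + H[Y_w]) and 𝔼_{u ∼ X₁+Y₂, w ∼ Y₁+X₂} (H[π_{V(u,w)}(X_u)] + H[π_{V(u,w)}(Y_w)]) ≤ 480 κ. -/
open Real Pointwise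

noncomputable section

open scoped Classical in
/-- class mass -/
def cm {Ω B : Type*} [Fintype Ω] (P : Ω → ℝ) (f : Ω → B) (ω : Ω) : ℝ :=
  ∑ ω', if f ω' = f ω then P ω' else 0

/-- entropy of `f` under `P` -/
def HH {Ω B : Type*} [Fintype Ω] (P : Ω → ℝ) (f : Ω → B) : ℝ :=
  ∑ ω, P ω * (-Real.log (cm P f ω))

lemma ent_eq {A : Type*} [Fintype A] (p : A → ℝ) : ent p = ∑ a, Real.negMulLog (p a) := by
  unfold ent; rw [finsum_eq_sum_of_fintype]

lemma isDist_iff {A : Type*} [Fintype A] (p : A → ℝ) :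
    IsDist p ↔ (∀ a, 0 ≤ p a) ∧ ∑ a, p a = 1 := by
  unfold IsDist; rw [finsum_eq_sum_of_fintype]

lemma conv_eq {A : Type*} [AddCommGroup A] [Fintype A] (p q : A → ℝ) (z : A) :
    conv p q z = ∑ x, p x * q (z - x) := by
  unfold conv; rw [finsum_eq_sum_of_fintype]

open scoped Classical in
lemma push_eq {A B : Type*} [Fintype A] (f : A → B) (p : A → ℝ) (b : B) :
    push f p b = ∑ a, if f a = b then p a else 0 := by
  unfold push
  rw [finsum_mem_def, finsum_eq_sum_of_fintype]
  apply Finset.sum_congr rfl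
  intro a _
  simp [Set.indicator_apply]

lemma sum_push {A B : Type*} [Fintype A] [Fintype B] (f : A → B) (p : A → ℝ) (φ : B → ℝ) :
    ∑ b, push f p b * φ b = ∑ a, p a * φ (f a) := by
  classical
  simp only [push_eq, Finset.sum_mul]
  rw [Finset.sum_comm]
  simp [ite_mul]

lemma IsDist.nonneg {A : Type*} {p : A → ℝ} (h : IsDist p) (a : A) : 0 ≤ p a := h.1 a

lemma IsDist.sum {A : Type*} [Fintype A] {p : A → ℝ} (h : IsDist p) : ∑ a, p a = 1 :=
  ((isDist_iff p).1 h).2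

lemma IsDist.le_one {A : Type*} [Fintype A] {p : A → ℝ} (h : IsDist p) (a : A) : p a ≤ 1 := by
  rw [← h.sum]; exact Finset.single_le_sum (fun i _ => h.1 i) (Finset.mem_univ a)

lemma ent_nonneg {A : Type*} [Fintype A] {p : A → ℝ} (h : IsDist p) : 0 ≤ ent p := by
  rw [ent_eq]
  exact Finset.sum_nonneg fun a _ => Real.negMulLog_nonneg (h.1 a) (h.le_one a)

lemma isDist_prod {A B : Type*} [Fintype A] [Fintype B] {p : A → ℝ} {q : B → ℝ}
    (hp : IsDist p) (hq : IsDist q) : IsDist (prodDist p q) := by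
  rw [isDist_iff]
  refine ⟨fun a => mul_nonneg (hp.1 _) (hq.1 _), ?_⟩
  simp only [prodDist, Fintype.sum_prod_type, ← Finset.mul_sum, hq.sum, mul_one, hp.sum]

lemma isDist_push {A B : Type*} [Fintype A] [Fintype B] (f : A → B) {p : A → ℝ}
    (hp : IsDist p) : IsDist (push f p) := by
  classical
  rw [isDist_iff]
  constructor
  · intro b; rw [push_eq]
    exact Finset.sum_nonneg fun a _ => by split_ifs <;> simp [hp.1 a]
  · simp only [push_eq]
    rw [Finset.sum_comm]
    simp [hp.sum]

lemma conv_eq_push {A : Type*} [AddCommGroup A] [Fintype A] (p q : A → ℝ)  :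
    conv p q = push (fun z : A × A => z.1 + z.2) (prodDist p q) := by
  classical
  ext z
  rw [conv_eq, push_eq, Fintype.sum_prod_type]
  apply Finset.sum_congr rfl
  intro x _
  simp only [prodDist]
  rw [Finset.sum_eq_single (-x + z)]
  · simp [neg_add_eq_sub]
  · intro b _ hb
    rw [if_neg]
    rintro rfl
    simp at hb
  · simp

lemma isDist_conv {A : Type*} [AddCommGroup A] [Fintype A] {p q : A → ℝ} (hp : IsDist p)
    (hq : IsDist q) : IsDist (conv p q) := by
  rw [conv_eq_push]; exact isDist_push _ (isDist_prod hp hq)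

lemma HH_push {Ω A B : Type*} [Fintype Ω] [Fintype A] (P : Ω → ℝ) (g : Ω → A) (f : A → B) :
    HH (push g P) f = HH P (f ∘ g) := by
  classical
  have hc : ∀ a, cm (push g P) f (g a) = cm P (f ∘ g) a := by
    intro a
    have := sum_push g P (fun b => if f b = f (g a) then 1 else 0)
    simpa [cm] using this
  unfold HH
  rw [sum_push g P (fun ω => -Real.log (cm (push g P) f ω))]
  simp only [hc]

lemma HH_id {A : Type*} [Fintype A] (P : A → ℝ) : HH P id = ent P := by
  classical
  rw [ent_eq, HH]
  apply Finset.sum_congr rfl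
  intro a _
  simp [cm, Real.negMulLog]

lemma ent_push {Ω A : Type*} [Fintype Ω] [Fintype A] (P : Ω → ℝ) (g : Ω → A) :
    ent (push g P) = HH P g := by
  rw [← HH_id, HH_push]; rfl

lemma HH_congr {Ω A B : Type*} [Fintype Ω] (P : Ω → ℝ) {f : Ω → A} {g : Ω → B}
    (h : ∀ x y, f x = f y ↔ g x = g y) : HH P f = HH P g := by
  classical
  unfold HH cm
  simp only [h]

lemma cm_nonneg {Ω A : Type*} [Fintype Ω] {P : Ω → ℝ} (hP : IsDist P) (f : Ω → A) (ω : Ω) :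
    0 ≤ cm P f ω := by
  classical
  exact Finset.sum_nonneg fun a _ => by split_ifs <;> simp [hP.1 a]

lemma le_cm {Ω A : Type*} [Fintype Ω] {P : Ω → ℝ} (hP : IsDist P) (f : Ω → A) (ω : Ω) :
    P ω ≤ cm P f ω := by
  classical
  have := Finset.single_le_sum (f := fun ω' => if f ω' = f ω then P ω' else 0)
    (fun i _ => by split_ifs <;> simp [hP.1 i]) (Finset.mem_univ ω)
  simpa [cm] using this

lemma HH_mono {Ω A B : Type*} [Fintype Ω] {P : Ω → ℝ} (hP : IsDist P) {f : Ω → A} {g : Ω → B}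
    (h : ∀ x y, g x = g y → f x = f y) : HH P f ≤ HH P g := by
  classical
  unfold HH
  apply Finset.sum_le_sum
  intro ω _
  rcases (hP.1 ω).eq_or_lt with h0 | h0
  · simp [← h0]
  apply mul_le_mul_of_nonneg_left _ h0.le
  apply neg_le_neg
  apply Real.log_le_log (h0.trans_le (le_cm hP g ω))
  unfold cm
  apply Finset.sum_le_sum
  intro x _
  by_cases hx : g x = g ω
  · simp [hx, h _ _ hx]
  · simp only [hx, if_false]; split_ifs <;> simp [hP.1 x]

lemma HH_equiv {Ω Ω' A : Type*} [Fintype Ω] [Fintype Ω'] (P : Ω → ℝ) (e : Ω' ≃ Ω) (f : Ω → A) :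
    HH (fun x => P (e x)) (fun x => f (e x)) = HH P f := by
  classical
  unfold HH cm
  rw [← Equiv.sum_comp e]
  apply Finset.sum_congr rfl
  intro x _
  congr 3
  exact Equiv.sum_comp e (fun ω' => if f ω' = f (e x) then P ω' else 0)

lemma cm_pos {Ω A : Type*} [Fintype Ω] {P : Ω → ℝ} (hP : IsDist P) (f : Ω → A) {ω : Ω}
    (h : 0 < P ω) : 0 < cm P f ω := h.trans_le (le_cm hP f ω)

lemma cm_congr {Ω A : Type*} [Fintype Ω] (P : Ω → ℝ) (f : Ω → A) {x y : Ω}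
    (h : f x = f y) : cm P f x = cm P f y := by
  unfold cm; rw [h]

/-- submodularity -/
lemma HH_submod {Ω A B C : Type*} [Fintype Ω] {P : Ω → ℝ} (hP : IsDist P)
    (f : Ω → A) (g : Ω → B) (h : Ω → C) :
    HH P (fun x => (f x, g x, h x)) + HH P h ≤
      HH P (fun x => (f x, h x)) + HH P (fun x => (g x, h x)) := by
  classical
  set M := cm P (fun x => (f x, g x, h x)) with hM
  set N := cm P h with hN
  set F := cm P (fun x => (f x, h x)) with hF
  set K := cm P (fun x => (g x, h x)) with hK
  have key : ∑ ω, P ω * (F ω * K ω / (M ω * N ω)) ≤ 1 := by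
    have e1 : ∀ ω, P ω * (F ω * K ω / (M ω * N ω)) =
        ∑ a, ∑ b, if h a = h b then P a * P b / N a *
          (if (f ω, g ω, h ω) = (f a, g b, h a) then P ω / M ω else 0) else 0 := by
      intro ω
      have : P ω * (F ω * K ω / (M ω * N ω)) = F ω * K ω * (P ω / M ω / N ω) := by
        by_cases hm : M ω = 0
        · simp [hm]
        by_cases hn : N ω = 0
        · simp [hn]
        field_simp
      rw [this, hF, hK, cm, cm, Finset.sum_mul_sum, Finset.sum_mul]
      apply Finset.sum_congr rfl
      intro a _
      rw [Finset.sum_mul]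
      apply Finset.sum_congr rfl
      intro b _
      by_cases hc : (f a = f ω ∧ h a = h ω) ∧ (g b = g ω ∧ h b = h ω)
      · obtain ⟨⟨h1, h2⟩, h3, h4⟩ := hc
        have : N a = N ω := cm_congr P h h2
        simp only [h1, h2, h3, h4, if_true, this]; ring
      · trans 0
        · apply mul_eq_zero_of_left
          by_contra hne
          apply hc
          have := left_ne_zero_of_mul hne
          have h2 := right_ne_zero_of_mul hne
          simp only [ne_eq, ite_eq_right_iff, not_forall, Prod.mk.injEq] at this h2
          exact ⟨this.1, h2.1⟩
        symm
        by_cases h5 : h a = h b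
        · rw [if_pos h5, if_neg, mul_zero]
          intro h6
          simp only [Prod.mk.injEq] at h6
          apply hc
          refine ⟨⟨h6.1.symm, h6.2.2.symm⟩, h6.2.1.symm, ?_⟩
          rw [← h5, h6.2.2]
        · rw [if_neg h5]
    simp only [e1]
    rw [Finset.sum_comm]
    have e2 : ∀ a, ∑ ω, ∑ b, (if h a = h b then P a * P b / N a *
          (if (f ω, g ω, h ω) = (f a, g b, h a) then P ω / M ω else 0) else 0) ≤ P a := by
      intro a
      rw [Finset.sum_comm]
      have e3 : ∀ b, ∑ ω, (if h a = h b then P a * P b / N a *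
          (if (f ω, g ω, h ω) = (f a, g b, h a) then P ω / M ω else 0) else 0) ≤
          if h b = h a then P a * P b / N a else 0 := by
        intro b
        by_cases hab : h a = h b
        · simp only [hab, if_true]
          rw [← Finset.mul_sum]
          apply mul_le_of_le_one_right
          · exact div_nonneg (mul_nonneg (hP.1 _) (hP.1 _)) (cm_nonneg hP _ _)
          by_cases hex : ∃ ω, (f ω, g ω, h ω) = (f a, g b, h b)
          · obtain ⟨ω0, h0⟩ := hex
            have : ∀ ω, (if (f ω, g ω, h ω) = (f a, g b, h b) then P ω / M ω else 0) =
                (if (f ω, g ω, h ω) = (f ω0, g ω0, h ω0) then P ω else 0) / M ω0 := by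
              intro ω
              rw [← h0]
              split_ifs with h1
              · rw [hM, cm_congr P (fun x => (f x, g x, h x)) h1]
              · simp
            simp only [this]
            rw [← Finset.sum_div]
            have hMM : M ω0 / M ω0 ≤ 1 := div_self_le_one _
            have hs : (∑ i, if (f i, g i, h i) = (f ω0, g ω0, h ω0) then P i else 0) = M ω0 := by
              rw [hM, cm]; congr!
            rw [hs]; exact hMM
          · push Not at hex
            simp [hex]
        · have : ¬ h b = h a := fun h => hab h.symm
          simp [hab, this]
      refine (Finset.sum_le_sum fun b _ => e3 b).trans ?_
      have : ∀ b, (if h b = h a then P a * P b / N a else 0) =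
          P a / N a * (if h b = h a then P b else 0) := by
        intro b; split_ifs <;> ring
      simp only [this]
      rw [← Finset.mul_sum]
      change P a / N a * N a ≤ P a
      by_cases hn : N a = 0
      · simp [hn, hP.1 a]
      · rw [div_mul_cancel₀ _ hn]
    refine (Finset.sum_le_sum fun a _ => e2 a).trans ?_
    rw [hP.sum]
  have key2 : ∀ ω, P ω * (-Real.log (M ω)) + P ω * (-Real.log (N ω)) -
      P ω * (-Real.log (F ω)) - P ω * (-Real.log (K ω)) ≤
      P ω * (F ω * K ω / (M ω * N ω)) - P ω := by
    intro ω
    rcases (hP.1 ω).eq_or_lt with h0 | h0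
    · simp [← h0]
    have a1 := cm_pos hP (fun x => (f x, g x, h x)) h0
    have a2 := cm_pos hP h h0
    have a3 := cm_pos hP (fun x => (f x, h x)) h0
    have a4 := cm_pos hP (fun x => (g x, h x)) h0
    rw [← hM] at a1; rw [← hN] at a2; rw [← hF] at a3; rw [← hK] at a4
    have := Real.log_le_sub_one_of_pos (show 0 < F ω * K ω / (M ω * N ω) by positivity)
    rw [Real.log_div (by positivity) (by positivity), Real.log_mul a3.ne' a4.ne',
      Real.log_mul a1.ne' a2.ne'] at this
    nlinarith [mul_le_mul_of_nonneg_left this h0.le]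
  have := Finset.sum_le_sum (s := Finset.univ) fun ω _ => key2 ω
  simp only [Finset.sum_sub_distrib, Finset.sum_add_distrib] at this
  rw [hP.sum] at this
  unfold HH
  linarith

lemma ent_prodDist {A B : Type*} [Fintype A] [Fintype B] {p : A → ℝ} {q : B → ℝ}
    (hp : IsDist p) (hq : IsDist q) : ent (prodDist p q) = ent p + ent q := by
  simp only [ent_eq, prodDist, Fintype.sum_prod_type, Real.negMulLog_mul, Finset.sum_add_distrib,
    ← Finset.mul_sum, ← Finset.sum_mul, hq.sum, hp.sum, one_mul]

lemma push_prod {A B C D : Type*} [Fintype A] [Fintype B] [Fintype C] [Fintype D]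
    (f : A → C) (g : B → D) (p : A → ℝ) (q : B → ℝ) :
    push (fun z : A × B => (f z.1, g z.2)) (prodDist p q) = prodDist (push f p) (push g q) := by
  classical
  ext ⟨c, d⟩
  simp only [push_eq, prodDist, Fintype.sum_prod_type, Finset.sum_mul_sum, Prod.mk.injEq]
  apply Finset.sum_congr rfl; intro a _
  apply Finset.sum_congr rfl; intro b _
  by_cases h1 : f a = c <;> by_cases h2 : g b = d <;> simp [h1, h2]

lemma HH_prod {A B C D : Type*} [Fintype A] [Fintype B] [Fintype C] [Fintype D]
    (f : A → C) (g : B → D) {p : A → ℝ} {q : B → ℝ} (hp : IsDist p) (hq : IsDist q) :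
    HH (prodDist p q) (fun z => (f z.1, g z.2)) = HH p f + HH q g := by
  rw [← ent_push, push_prod, ent_prodDist (isDist_push f hp) (isDist_push g hq), ent_push, ent_push]

lemma push_push {A B C : Type*} [Fintype A] [Fintype B] (f : A → B) (g : B → C) (p : A → ℝ) :
    push g (push f p) = push (fun a => g (f a)) p := by
  classical
  ext c
  rw [push_eq, push_eq]
  have := sum_push f p (fun b => if g b = c then 1 else 0)
  simpa using this

/-- chain rule for a kernel -/
lemma ent_chain {Θ A : Type*} [Fintype Θ] [Fintype A] (w : Θ → ℝ) (κ : Θ → A → ℝ)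
    (hκ : ∀ θ, w θ ≠ 0 → IsDist (κ θ)) :
    ent (fun z : Θ × A => w z.1 * κ z.1 z.2) = ent w + ∑ θ, w θ * ent (κ θ) := by
  simp only [ent_eq, Fintype.sum_prod_type]
  rw [← Finset.sum_add_distrib]
  apply Finset.sum_congr rfl
  intro θ _
  by_cases h : w θ = 0
  · simp [h]
  · simp only [Real.negMulLog_mul, Finset.sum_add_distrib, ← Finset.mul_sum, ← Finset.sum_mul,
      (hκ θ h).sum, one_mul]

lemma isDist_chain {Θ A : Type*} [Fintype Θ] [Fintype A] {w : Θ → ℝ} {κ : Θ → A → ℝ}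
    (hw : IsDist w) (hκ : ∀ θ, w θ ≠ 0 → IsDist (κ θ)) :
    IsDist (fun z : Θ × A => w z.1 * κ z.1 z.2) := by
  rw [isDist_iff]
  constructor
  · rintro ⟨θ, a⟩
    by_cases h : w θ = 0
    · simp [h]
    · exact mul_nonneg (hw.1 θ) ((hκ θ h).1 a)
  · rw [Fintype.sum_prod_type, ← hw.sum]
    apply Finset.sum_congr rfl
    intro θ _
    by_cases h : w θ = 0
    · simp [h]
    · simp only [← Finset.mul_sum, (hκ θ h).sum, mul_one]

/-- concavity -/
lemma ent_concave {Θ A : Type*} [Fintype Θ] [Fintype A] {w : Θ → ℝ} {κ : Θ → A → ℝ}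
    (hw : IsDist w) (hκ : ∀ θ, w θ ≠ 0 → IsDist (κ θ)) :
    ∑ θ, w θ * ent (κ θ) ≤ ent (fun a => ∑ θ, w θ * κ θ a) := by
  classical
  simp only [ent_eq, Finset.mul_sum]
  rw [Finset.sum_comm]
  apply Finset.sum_le_sum
  intro a _
  have h := Real.concaveOn_negMulLog.le_map_sum (t := Finset.univ) (w := w)
    (p := fun θ => if w θ = 0 then 0 else κ θ a) (fun i _ => hw.1 i) hw.sum (by
      intro i _
      by_cases hi : w i = 0
      · simp [hi]
      · simp only [hi, if_false]; exact (hκ i hi).1 a)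
  simp only [smul_eq_mul] at h
  convert h using 1
  · apply Finset.sum_congr rfl
    intro i _
    by_cases hi : w i = 0 <;> simp [hi]
  · congr 1
    apply Finset.sum_congr rfl
    intro i _
    by_cases hi : w i = 0 <;> simp [hi]

set_option linter.unusedSectionVars false

section Grp
variable {G : Type*} [AddCommGroup G] [Fintype G]

lemma conv_comm' (p q : G → ℝ) : conv p q = conv q p := by
  ext z
  rw [conv_eq, conv_eq, ← Equiv.sum_comp (Equiv.subLeft z)]
  simp [mul_comm]

lemma conv_assoc' (p q r : G → ℝ) : conv (conv p q) r = conv p (conv q r) := by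
  ext z
  simp only [conv_eq, Finset.sum_mul, Finset.mul_sum]
  rw [Finset.sum_comm]
  apply Finset.sum_congr rfl
  intro x _
  rw [← Equiv.sum_comp (Equiv.addRight x)]
  simp [mul_assoc, sub_sub, add_comm]

lemma ent_conv_eq (p q : G → ℝ) :
    ent (conv p q) = HH (prodDist p q) (fun z : G × G => z.1 + z.2) := by
  rw [conv_eq_push, ent_push]

lemma ent_prod_eq (p q : G → ℝ) :
    ent (prodDist p q) = HH (prodDist p q) (fun z : G × G => z) := by
  rw [← HH_id]; rfl

/-- adding an independent variable increases entropy -/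
lemma ent_le_conv {p q : G → ℝ} (hp : IsDist p) (hq : IsDist q) : ent p ≤ ent (conv p q) := by
  have h := HH_submod (isDist_prod hp hq) (fun z => z.1 + z.2) (fun z => z.2) (fun _ => ())
  have e0 : HH (prodDist p q) (fun _ => ()) = 0 := by
    unfold HH
    apply Finset.sum_eq_zero
    intro a _
    have : cm (prodDist p q) (fun _ => ()) a = 1 := by
      simp [cm, (isDist_prod hp hq).sum]
    simp [this]
  have e1 : HH (prodDist p q) (fun x => (x.1 + x.2, x.2, ())) = ent p + ent q := by
    rw [← ent_prodDist hp hq, ent_prod_eq]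
    apply HH_congr
    rintro ⟨a, b⟩ ⟨c, d⟩
    simp only [Prod.mk.injEq]
    constructor
    · rintro ⟨h1, h2, -⟩; subst h2; simpa using h1
    · rintro ⟨rfl, rfl⟩; simp
  have e2 : HH (prodDist p q) (fun x => (x.1 + x.2, ())) = ent (conv p q) := by
    rw [ent_conv_eq]
    apply HH_congr; simp
  have e3 : HH (prodDist p q) (fun x => (x.2, ())) = ent q := by
    have : HH (prodDist p q) (fun x => (x.2, ())) =
        HH (prodDist p q) (fun x => ((fun _ => ()) x.1, id x.2)) := by
      apply HH_congr; simp
    rw [this, HH_prod (fun _ : G => ()) id hp hq, HH_id]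
    have : HH p (fun _ => ()) = 0 := by
      unfold HH
      apply Finset.sum_eq_zero
      intro a _
      have : cm p (fun _ => ()) a = 1 := by simp [cm, hp.sum]
      simp [this]
    rw [this, zero_add]
  rw [e0, e1, e2, e3] at h
  linarith

/-- Kaimanovich--Vershik -/
lemma ent_KV {p q r : G → ℝ} (hp : IsDist p) (hq : IsDist q) (hr : IsDist r) :
    ent (conv p (conv q r)) + ent q ≤ ent (conv p q) + ent (conv q r) := by
  have hP := isDist_prod (isDist_prod hp hq) hr
  set P := prodDist (prodDist p q) r with hPdef
  have h := HH_submod hP (fun z => z.1.1) (fun z => z.2) (fun z => z.1.1 + z.1.2 + z.2)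
  have eS : HH P (fun z => z.1.1 + z.1.2 + z.2) = ent (conv p (conv q r)) := by
    rw [← conv_assoc', ent_conv_eq, conv_eq_push]
    have hid : r = push id r := by ext a; classical simp [push_eq]
    conv_rhs => rw [hid]
    rw [← push_prod, HH_push]; rfl
  have e1 : HH P (fun x => (x.1.1, x.2, x.1.1 + x.1.2 + x.2)) = ent p + ent q + ent r := by
    rw [← ent_prodDist hp hq, ← ent_prodDist (isDist_prod hp hq) hr, ← HH_id]
    apply HH_congr
    rintro ⟨⟨a, b⟩, c⟩ ⟨⟨d, e⟩, f⟩
    simp only [Prod.mk.injEq, id]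
    constructor
    · rintro ⟨rfl, rfl, h⟩; simpa using h
    · rintro ⟨⟨rfl, rfl⟩, rfl⟩; simp
  have e2 : HH P (fun x => (x.1.1, x.1.1 + x.1.2 + x.2)) = ent p + ent (conv q r) := by
    rw [ent_conv_eq, ← HH_id, ← HH_prod _ _ hp (isDist_prod hq hr),
      ← HH_equiv _ (Equiv.prodAssoc G G G)]
    have : P = fun x => prodDist p (prodDist q r) (Equiv.prodAssoc G G G x) := by
      ext ⟨⟨a, b⟩, c⟩; simp [P, prodDist, mul_assoc]
    rw [← this]
    apply HH_congr
    rintro ⟨⟨a, b⟩, c⟩ ⟨⟨d, e⟩, f⟩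
    simp only [Prod.mk.injEq, id, Equiv.prodAssoc_apply]
    constructor
    · rintro ⟨rfl, h⟩; simpa [add_assoc] using h
    · rintro ⟨rfl, h⟩; simpa [add_assoc] using h
  have e3 : HH P (fun x => (x.2, x.1.1 + x.1.2 + x.2)) = ent (conv p q) + ent r := by
    rw [ent_conv_eq, ← HH_id r, ← HH_prod _ _ (isDist_prod hp hq) hr]
    apply HH_congr
    rintro ⟨⟨a, b⟩, c⟩ ⟨⟨d, e⟩, f⟩
    simp only [Prod.mk.injEq, id]
    constructor
    · rintro ⟨rfl, h⟩; simpa using h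
    · rintro ⟨h, rfl⟩; simpa using h
  rw [eS, e1, e2, e3] at h
  linarith

/-- subadditivity -/
lemma ent_conv_le {p q : G → ℝ} (hp : IsDist p) (hq : IsDist q) :
    ent (conv p q) ≤ ent p + ent q := by
  rw [← ent_prodDist hp hq, ent_conv_eq, ent_prod_eq]
  apply HH_mono (isDist_prod hp hq)
  rintro x y rfl; rfl

/-! fibers -/

/-- conditional law of `X` given `X+Y=u` -/
def fb (p q : G → ℝ) (u : G) : G → ℝ := fun x => p x * q (u - x) / conv p q u

lemma jointSum_eq (p q : G → ℝ) (x u : G) : jointSum p q (x, u) = p x * q (u - x) := by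
  classical
  rw [jointSum, push_eq, Fintype.sum_prod_type, Finset.sum_eq_single x]
  · rw [Finset.sum_eq_single (u - x)]
    · simp [prodDist]
    · intro b _ hb
      rw [if_neg]
      intro h
      apply hb
      simp only [Prod.mk.injEq, true_and] at h
      rw [← h]; simp
    · simp
  · intro b _ hb
    apply Finset.sum_eq_zero
    intro c _
    simp [hb]
  · simp

lemma push_snd_jointSum (p q : G → ℝ) : push Prod.snd (jointSum p q) = conv p q := by
  rw [jointSum, push_push, conv_eq_push]

lemma fiber_jointSum (p q : G → ℝ) (u : G) : fiber (jointSum p q) u = fb p q u := by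
  ext x
  rw [fiber, push_snd_jointSum, jointSum_eq, fb]

lemma conv_mul_fb {p q : G → ℝ} (hp : IsDist p) (hq : IsDist q) (u x : G) :
    conv p q u * fb p q u x = p x * q (u - x) := by
  unfold fb
  by_cases h : conv p q u = 0
  · rw [h, zero_mul]
    rw [conv_eq] at h
    exact ((Finset.sum_eq_zero_iff_of_nonneg
      (fun i _ => mul_nonneg (hp.1 i) (hq.1 _))).1 h x (Finset.mem_univ x)).symm
  · field_simp

lemma isDist_fb {p q : G → ℝ} (hp : IsDist p) (hq : IsDist q) (u : G) (h : conv p q u ≠ 0) :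
    IsDist (fb p q u) := by
  rw [isDist_iff]
  constructor
  · intro x
    exact div_nonneg (mul_nonneg (hp.1 _) (hq.1 _)) ((isDist_conv hp hq).1 u)
  · unfold fb
    rw [← Finset.sum_div, ← conv_eq, div_self h]

/-- `H[X | X+Y]` -/
lemma sum_ent_fb {p q : G → ℝ} (hp : IsDist p) (hq : IsDist q) :
    ∑ u, conv p q u * ent (fb p q u) = ent p + ent q - ent (conv p q) := by
  have h := ent_chain (conv p q) (fb p q) (isDist_fb hp hq)
  have : ent (fun z : G × G => conv p q z.1 * fb p q z.1 z.2) = ent p + ent q := by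
    rw [← ent_prodDist hp hq]
    simp only [conv_mul_fb hp hq, ent_eq, Fintype.sum_prod_type, prodDist]
    rw [Finset.sum_comm]
    apply Finset.sum_congr rfl
    intro x _
    exact Equiv.sum_comp (Equiv.subRight x) (fun y => Real.negMulLog (p x * q y))
  linarith

end Grp

lemma push_chain {Θ A B : Type*} [Fintype Θ] [Fintype A] [Fintype B] (w : Θ → ℝ)
    (κ : Θ → A → ℝ) (f : A → B) :
    push (fun z : Θ × A => (z.1, f z.2)) (fun z => w z.1 * κ z.1 z.2) =
      fun z => w z.1 * push f (κ z.1) z.2 := by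
  classical
  ext ⟨θ, b⟩
  simp only [push_eq, Fintype.sum_prod_type, Prod.mk.injEq]
  rw [Finset.sum_eq_single θ]
  · simp [Finset.mul_sum]
  · intro c _ hc; simp [hc]
  · simp

lemma push_fst_prod {A B : Type*} [Fintype A] [Fintype B] (p : A → ℝ) {q : B → ℝ}
    (hq : IsDist q) : push Prod.fst (prodDist p q) = p := by
  classical
  ext a
  simp only [push_eq, Fintype.sum_prod_type, prodDist]
  rw [Finset.sum_eq_single a]
  · simp [← Finset.mul_sum, hq.sum]
  · intro c _ hc; simp [hc]
  · simp

lemma push_snd_prod {A B : Type*} [Fintype A] [Fintype B] {p : A → ℝ} (q : B → ℝ)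
    (hp : IsDist p) : push Prod.snd (prodDist p q) = q := by
  classical
  ext a
  simp only [push_eq, Fintype.sum_prod_type_right, prodDist]
  rw [Finset.sum_eq_single a]
  · simp [← Finset.sum_mul, hp.sum]
  · intro c _ hc; simp [hc]
  · simp

section Four
variable {G : Type*} [CommRing G] [Fintype G]

def P4 (p1 p2 q1 q2 : G → ℝ) : (G × G) × (G × G) → ℝ := prodDist (prodDist p1 p2) (prodDist q1 q2)

def T4 (p1 p2 q1 q2 : G → ℝ) : ℝ :=
  HH (P4 p1 p2 q1 q2) (fun z => (z.1.1 + z.1.2, z.1.1 + z.2.1, z.1.1 + z.2.2))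

def wt (p1 p2 q1 q2 : G → ℝ) : G × G → ℝ := prodDist (conv p1 p2) (conv q1 q2)

def Zk (p1 p2 q1 q2 : G → ℝ) (θ : G × G) : G → ℝ := conv (fb p1 p2 θ.1) (fb q1 q2 θ.2)

variable {p1 p2 q1 q2 : G → ℝ}

lemma isDist_P4 (h1 : IsDist p1) (h2 : IsDist p2) (h3 : IsDist q1) (h4 : IsDist q2) :
    IsDist (P4 p1 p2 q1 q2) := isDist_prod (isDist_prod h1 h2) (isDist_prod h3 h4)

lemma T4_swap (p1 p2 q1 q2 : G → ℝ) : T4 p1 p2 q1 q2 = T4 p1 q2 q1 p2 := by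
  unfold T4
  let e : (G × G) × (G × G) ≃ (G × G) × (G × G) :=
    { toFun := fun z => ((z.1.1, z.2.2), (z.2.1, z.1.2))
      invFun := fun z => ((z.1.1, z.2.2), (z.2.1, z.1.2))
      left_inv := fun z => rfl
      right_inv := fun z => rfl }
  rw [← HH_equiv (P4 p1 q2 q1 p2) e]
  have : (fun x => P4 p1 q2 q1 p2 (e x)) = P4 p1 p2 q1 q2 := by
    ext ⟨⟨a, b⟩, c, d⟩; simp [P4, prodDist, e]; ring
  rw [this]
  apply HH_congr
  intro x y
  simp only [Prod.mk.injEq, e, Equiv.coe_fn_mk]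
  tauto

lemma HH_P4_S : HH (P4 p1 p2 q1 q2) (fun z => z.1.1 + z.1.2 + (z.2.1 + z.2.2)) =
    ent (conv (conv p1 p2) (conv q1 q2)) := by
  rw [ent_conv_eq, conv_eq_push, conv_eq_push, ← push_prod, HH_push]; rfl

lemma HH_P4_A (h1 : IsDist p1) (h2 : IsDist p2) (h3 : IsDist q1) (h4 : IsDist q2) :
    HH (P4 p1 p2 q1 q2) (fun z => (z.1.1 + z.2.1, z.1.1 + z.1.2 + (z.2.1 + z.2.2))) =
    ent (conv p1 q1) + ent (conv p2 q2) := by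
  rw [ent_conv_eq, ent_conv_eq, ← HH_prod _ _ (isDist_prod h1 h3) (isDist_prod h2 h4)]
  let e : (G × G) × (G × G) ≃ (G × G) × (G × G) :=
    { toFun := fun z => ((z.1.1, z.2.1), (z.1.2, z.2.2))
      invFun := fun z => ((z.1.1, z.2.1), (z.1.2, z.2.2))
      left_inv := fun z => rfl
      right_inv := fun z => rfl }
  rw [← HH_equiv (prodDist (prodDist p1 q1) (prodDist p2 q2)) e]
  have : (fun x => prodDist (prodDist p1 q1) (prodDist p2 q2) (e x)) = P4 p1 p2 q1 q2 := by
    ext ⟨⟨a, b⟩, c, d⟩; simp [P4, prodDist, e]; ring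
  rw [this]
  apply HH_congr
  rintro ⟨⟨a, b⟩, c, d⟩ ⟨⟨a', b'⟩, c', d'⟩
  simp only [Prod.mk.injEq, e, Equiv.coe_fn_mk]
  grind

lemma HH_P4_B (hc : (2 : G) = 0) (h1 : IsDist p1) (h2 : IsDist p2) (h3 : IsDist q1)
    (h4 : IsDist q2) :
    HH (P4 p1 p2 q1 q2)
      (fun z => (z.1.1 + z.2.1 + (z.2.1 + z.2.2), z.1.1 + z.1.2 + (z.2.1 + z.2.2))) =
    ent (conv p1 q2) + ent (conv p2 q1) := by
  rw [ent_conv_eq, ent_conv_eq, ← HH_prod _ _ (isDist_prod h1 h4) (isDist_prod h2 h3)]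
  let e : (G × G) × (G × G) ≃ (G × G) × (G × G) :=
    { toFun := fun z => ((z.1.1, z.2.2), (z.1.2, z.2.1))
      invFun := fun z => ((z.1.1, z.2.1), (z.2.2, z.1.2))
      left_inv := fun z => rfl
      right_inv := fun z => rfl }
  rw [← HH_equiv (prodDist (prodDist p1 q2) (prodDist p2 q1)) e]
  have : (fun x => prodDist (prodDist p1 q2) (prodDist p2 q1) (e x)) = P4 p1 p2 q1 q2 := by
    ext ⟨⟨a, b⟩, c, d⟩; simp [P4, prodDist, e]; ring
  rw [this]
  apply HH_congr
  rintro ⟨⟨a, b⟩, c, d⟩ ⟨⟨a', b'⟩, c', d'⟩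
  simp only [Prod.mk.injEq, e, Equiv.coe_fn_mk]
  grind

lemma T4_eq (hc : (2 : G) = 0) : T4 p1 p2 q1 q2 =
    HH (P4 p1 p2 q1 q2) (fun z => ((z.1.1 + z.1.2, z.2.1 + z.2.2), z.1.1 + z.2.1)) := by
  apply HH_congr
  rintro ⟨⟨a, b⟩, c, d⟩ ⟨⟨a', b'⟩, c', d'⟩
  simp only [Prod.mk.injEq]
  grind

/-- `T + H[S] ≤ H[A,S] + H[B,S]` -/
lemma T4_submod (hc : (2 : G) = 0) (h1 : IsDist p1) (h2 : IsDist p2) (h3 : IsDist q1)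
    (h4 : IsDist q2) :
    T4 p1 p2 q1 q2 + ent (conv (conv p1 p2) (conv q1 q2)) ≤
      (ent (conv p1 q1) + ent (conv p2 q2)) + (ent (conv p1 q2) + ent (conv p2 q1)) := by
  have h := HH_submod (isDist_P4 h1 h2 h3 h4) (fun z => z.1.1 + z.2.1)
    (fun z => z.1.1 + z.2.1 + (z.2.1 + z.2.2)) (fun z => z.1.1 + z.1.2 + (z.2.1 + z.2.2))
  rw [HH_P4_A h1 h2 h3 h4, HH_P4_B hc h1 h2 h3 h4, HH_P4_S] at h
  refine le_trans (le_of_eq ?_) h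
  congr 1
  apply HH_congr
  rintro ⟨⟨a, b⟩, c, d⟩ ⟨⟨a', b'⟩, c', d'⟩
  simp only [Prod.mk.injEq]
  grind

lemma isDist_wt (h1 : IsDist p1) (h2 : IsDist p2) (h3 : IsDist q1) (h4 : IsDist q2) :
    IsDist (wt p1 p2 q1 q2) := isDist_prod (isDist_conv h1 h2) (isDist_conv h3 h4)

lemma isDist_Zk (h1 : IsDist p1) (h2 : IsDist p2) (h3 : IsDist q1) (h4 : IsDist q2)
    (θ : G × G) (h : wt p1 p2 q1 q2 θ ≠ 0) : IsDist (Zk p1 p2 q1 q2 θ) :=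
  isDist_conv (isDist_fb h1 h2 _ (left_ne_zero_of_mul h))
    (isDist_fb h3 h4 _ (right_ne_zero_of_mul h))

lemma R3_eq (h1 : IsDist p1) (h2 : IsDist p2) (h3 : IsDist q1) (h4 : IsDist q2) :
    (fun z : (G × G) × G => wt p1 p2 q1 q2 z.1 * Zk p1 p2 q1 q2 z.1 z.2) =
    push (fun z => ((z.1.1 + z.1.2, z.2.1 + z.2.2), z.1.1 + z.2.1)) (P4 p1 p2 q1 q2) := by
  classical
  ext ⟨⟨u, w⟩, z⟩
  have e1 : wt p1 p2 q1 q2 (u, w) * Zk p1 p2 q1 q2 (u, w) z =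
      ∑ x, (p1 x * p2 (u - x)) * (q1 (z - x) * q2 (w - (z - x))) := by
    simp only [wt, Zk, prodDist, conv_eq (fb p1 p2 u), Finset.mul_sum]
    apply Finset.sum_congr rfl
    intro x _
    rw [← conv_mul_fb h1 h2, ← conv_mul_fb h3 h4]; ring
  rw [e1, push_eq, Fintype.sum_prod_type, Fintype.sum_prod_type]
  apply Finset.sum_congr rfl
  intro x _
  rw [Finset.sum_eq_single (u - x), Finset.sum_eq_single (z - x, w - (z - x))]
  · simp [P4, prodDist]
  · rintro ⟨c, d⟩ _ hne
    rw [if_neg]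
    intro h
    apply hne
    simp only [Prod.mk.injEq] at h ⊢
    grind
  · simp
  · intro b _ hne
    apply Finset.sum_eq_zero
    rintro ⟨c, d⟩ _
    rw [if_neg]
    intro h
    apply hne
    simp only [Prod.mk.injEq] at h ⊢
    grind
  · simp

/-- `H[X₁+Y₁ | X₁+X₂, Y₁+Y₂] = T - H[X₁+X₂] - H[Y₁+Y₂]` -/
lemma sum_ent_Zk (hc : (2 : G) = 0) (h1 : IsDist p1) (h2 : IsDist p2) (h3 : IsDist q1)
    (h4 : IsDist q2) :
    ∑ θ, wt p1 p2 q1 q2 θ * ent (Zk p1 p2 q1 q2 θ) =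
      T4 p1 p2 q1 q2 - ent (conv p1 p2) - ent (conv q1 q2) := by
  have h := ent_chain (wt p1 p2 q1 q2) (Zk p1 p2 q1 q2) (isDist_Zk h1 h2 h3 h4)
  rw [R3_eq h1 h2 h3 h4, ent_push, ← T4_eq hc, wt,
    ent_prodDist (isDist_conv h1 h2) (isDist_conv h3 h4)] at h
  rw [wt]
  linarith

/-- Balog--Szemeredi--Gowers -/
lemma BSG (hc : (2 : G) = 0) (h1 : IsDist p1) (h2 : IsDist p2) (h3 : IsDist q1)
    (h4 : IsDist q2) :
    ∑ θ, wt p1 p2 q1 q2 θ * ent (conv (Zk p1 p2 q1 q2 θ) (Zk p1 p2 q1 q2 θ)) ≤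
      2 * (ent (conv p1 q1) + ent (conv p2 q2)) + 2 * (ent (conv p1 q2) + ent (conv p2 q1))
      + (ent (conv p1 p2) + ent (conv q1 q2)) - 2 * T4 p1 p2 q1 q2
      - 3 * ent (conv (conv p1 p2) (conv q1 q2)) := by
  set w := wt p1 p2 q1 q2 with hw
  set Z := Zk p1 p2 q1 q2 with hZ
  have hwd : IsDist w := isDist_wt h1 h2 h3 h4
  have hZd : ∀ θ, w θ ≠ 0 → IsDist (Z θ) := isDist_Zk h1 h2 h3 h4
  have hZZ : ∀ θ, w θ ≠ 0 → IsDist (prodDist (Z θ) (Z θ)) :=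
    fun θ h => isDist_prod (hZd θ h) (hZd θ h)
  have hR := isDist_chain hwd hZZ
  set R : (G × G) × (G × G) → ℝ := fun z => w z.1 * prodDist (Z z.1) (Z z.1) z.2 with hRdef
  have hew : ent w = ent (conv p1 p2) + ent (conv q1 q2) :=
    ent_prodDist (isDist_conv h1 h2) (isDist_conv h3 h4)
  have m1 : push (fun z : (G × G) × (G × G) => (z.1, z.2.1)) R = fun z => w z.1 * Z z.1 z.2 := by
    rw [hRdef, push_chain w (fun θ => prodDist (Z θ) (Z θ)) Prod.fst]
    ext ⟨θ, a⟩
    by_cases h : w θ = 0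
    · simp [h]
    · simp only [push_fst_prod _ (hZd θ h)]
  have m2 : push (fun z : (G × G) × (G × G) => (z.1, z.2.2)) R = fun z => w z.1 * Z z.1 z.2 := by
    rw [hRdef, push_chain w (fun θ => prodDist (Z θ) (Z θ)) Prod.snd]
    ext ⟨θ, a⟩
    by_cases h : w θ = 0
    · simp [h]
    · simp only [push_snd_prod _ (hZd θ h)]
  rw [R3_eq h1 h2 h3 h4] at m1 m2
  -- total entropy
  have E0 : HH R (fun z => z) = 2 * T4 p1 p2 q1 q2 - (ent (conv p1 p2) + ent (conv q1 q2)) := by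
    have : HH R (fun z => z) = ent R := HH_id R
    rw [this, hRdef, ent_chain w (fun θ => prodDist (Z θ) (Z θ)) hZZ, hew]
    have hs := sum_ent_Zk hc h1 h2 h3 h4
    rw [← hw, ← hZ] at hs
    have : ∀ θ, w θ * ent (prodDist (Z θ) (Z θ)) = 2 * (w θ * ent (Z θ)) := by
      intro θ
      by_cases h : w θ = 0
      · simp [h]
      · rw [ent_prodDist (hZd θ h) (hZd θ h)]; ring
    simp only [this, ← Finset.mul_sum, hs]
    ring
  have E1 : HH R (fun z => (z.1, z.2.1 + z.2.2)) =
      ent (conv p1 p2) + ent (conv q1 q2) + ∑ θ, w θ * ent (conv (Z θ) (Z θ)) := by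
    have : HH R (fun z => (z.1, z.2.1 + z.2.2)) =
        ent (push (fun z : (G × G) × (G × G) => (z.1, z.2.1 + z.2.2)) R) := (ent_push _ _).symm
    rw [this, hRdef, push_chain w (fun θ => prodDist (Z θ) (Z θ)) (fun z => z.1 + z.2),
      ← hew]
    simp only [← conv_eq_push]
    exact ent_chain w (fun θ => conv (Z θ) (Z θ)) fun θ h => isDist_conv (hZd θ h) (hZd θ h)
  have E2 : HH R (fun z => z.1) = ent (conv p1 p2) + ent (conv q1 q2) := by
    have : HH R (fun z => z.1) = HH (push (fun z : (G × G) × (G × G) => (z.1, z.2.1)) R)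
      (fun z => z.1) := by rw [HH_push]; rfl
    rw [this, m1, HH_push, ent_conv_eq, ent_conv_eq,
      ← HH_prod _ _ (isDist_prod h1 h2) (isDist_prod h3 h4)]; rfl
  have ES : HH R (fun z => z.1.1 + z.1.2) = ent (conv (conv p1 p2) (conv q1 q2)) := by
    have : HH R (fun z => z.1.1 + z.1.2) =
      HH (push (fun z : (G × G) × (G × G) => (z.1, z.2.1)) R) (fun z => z.1.1 + z.1.2) := by
        rw [HH_push]; rfl
    rw [this, m1, HH_push, ← HH_P4_S]; rfl
  have EA1 : HH R (fun z => (z.2.1, z.1.1 + z.1.2)) = ent (conv p1 q1) + ent (conv p2 q2) := by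
    have : HH R (fun z => (z.2.1, z.1.1 + z.1.2)) =
      HH (push (fun z : (G × G) × (G × G) => (z.1, z.2.1)) R)
        (fun z => (z.2, z.1.1 + z.1.2)) := by rw [HH_push]; rfl
    rw [this, m1, HH_push, ← HH_P4_A h1 h2 h3 h4]; rfl
  have EA2 : HH R (fun z => (z.2.2, z.1.1 + z.1.2)) = ent (conv p1 q1) + ent (conv p2 q2) := by
    have : HH R (fun z => (z.2.2, z.1.1 + z.1.2)) =
      HH (push (fun z : (G × G) × (G × G) => (z.1, z.2.2)) R)
        (fun z => (z.2, z.1.1 + z.1.2)) := by rw [HH_push]; rfl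
    rw [this, m2, HH_push, ← HH_P4_A h1 h2 h3 h4]; rfl
  have EB1 : HH R (fun z => (z.2.1 + z.1.2, z.1.1 + z.1.2)) =
      ent (conv p1 q2) + ent (conv p2 q1) := by
    have : HH R (fun z => (z.2.1 + z.1.2, z.1.1 + z.1.2)) =
      HH (push (fun z : (G × G) × (G × G) => (z.1, z.2.1)) R)
        (fun z => (z.2 + z.1.2, z.1.1 + z.1.2)) := by rw [HH_push]; rfl
    rw [this, m1, HH_push, ← HH_P4_B hc h1 h2 h3 h4]; rfl
  have EB2 : HH R (fun z => (z.2.2 + z.1.2, z.1.1 + z.1.2)) =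
      ent (conv p1 q2) + ent (conv p2 q1) := by
    have : HH R (fun z => (z.2.2 + z.1.2, z.1.1 + z.1.2)) =
      HH (push (fun z : (G × G) × (G × G) => (z.1, z.2.2)) R)
        (fun z => (z.2 + z.1.2, z.1.1 + z.1.2)) := by rw [HH_push]; rfl
    rw [this, m2, HH_push, ← HH_P4_B hc h1 h2 h3 h4]; rfl
  -- submodularities
  have s1 := HH_submod hR (fun z => z.2.1) (fun z => z.2.1 + z.1.2)
    (fun z => (z.2.1 + z.2.2 + z.1.2, z.1.1 + z.1.2))
  have s2 := HH_submod hR (fun z => z.2.1) (fun z => z.2.2 + z.1.2) (fun z => z.1.1 + z.1.2)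
  have s3 := HH_submod hR (fun z => z.2.1 + z.1.2) (fun z => z.2.2) (fun z => z.1.1 + z.1.2)
  have s4 := HH_submod hR (fun z => z.2.1 + z.2.2 + z.1.2) (fun z => z.1) (fun z => z.1.1 + z.1.2)
  have c1 : HH R (fun z => (z.2.1, z.2.1 + z.1.2, z.2.1 + z.2.2 + z.1.2, z.1.1 + z.1.2)) =
      HH R (fun z => z) := by
    apply HH_congr
    rintro ⟨⟨a, b⟩, c, d⟩ ⟨⟨a', b'⟩, c', d'⟩
    simp only [Prod.mk.injEq]; grind
  have c2 : HH R (fun z => (z.2.1, z.2.1 + z.2.2 + z.1.2, z.1.1 + z.1.2)) =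
      HH R (fun z => (z.2.1, z.2.2 + z.1.2, z.1.1 + z.1.2)) := by
    apply HH_congr
    rintro ⟨⟨a, b⟩, c, d⟩ ⟨⟨a', b'⟩, c', d'⟩
    simp only [Prod.mk.injEq]; grind
  have c3 : HH R (fun z => (z.2.1 + z.1.2, z.2.1 + z.2.2 + z.1.2, z.1.1 + z.1.2)) =
      HH R (fun z => (z.2.1 + z.1.2, z.2.2, z.1.1 + z.1.2)) := by
    apply HH_congr
    rintro ⟨⟨a, b⟩, c, d⟩ ⟨⟨a', b'⟩, c', d'⟩
    simp only [Prod.mk.injEq]; grind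
  have c4 : HH R (fun z => (z.2.1 + z.2.2 + z.1.2, z.1, z.1.1 + z.1.2)) =
      HH R (fun z => (z.1, z.2.1 + z.2.2)) := by
    apply HH_congr
    rintro ⟨⟨a, b⟩, c, d⟩ ⟨⟨a', b'⟩, c', d'⟩
    simp only [Prod.mk.injEq]; grind
  have c5 : HH R (fun z => (z.1, z.1.1 + z.1.2)) = HH R (fun z => z.1) := by
    apply HH_congr
    rintro ⟨⟨a, b⟩, c, d⟩ ⟨⟨a', b'⟩, c', d'⟩
    simp only [Prod.mk.injEq]; grind
  rw [c1, c2, c3, E0] at s1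
  rw [EA1, EB2, ES] at s2
  rw [EA2, EB1, ES] at s3
  rw [c4, c5, E1, E2, ES] at s4
  linarith

end Four

section PFR
variable {G : Type*} [CommRing G] [Fintype G]

lemma conv_sum_right {Θ : Type*} [Fintype Θ] (p0 : G → ℝ) (w : Θ → ℝ) (κ : Θ → G → ℝ) (a : G) :
    ∑ θ, w θ * conv p0 (κ θ) a = conv p0 (fun x => ∑ θ, w θ * κ θ x) a := by
  simp only [conv_eq, Finset.mul_sum]
  rw [Finset.sum_comm]
  apply Finset.sum_congr rfl; intro x _
  apply Finset.sum_congr rfl; intro y _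
  ring

lemma ent_conv_concave {Θ : Type*} [Fintype Θ] {p0 : G → ℝ} (h0 : IsDist p0) {w : Θ → ℝ}
    {κ : Θ → G → ℝ} (hw : IsDist w) (hκ : ∀ θ, w θ ≠ 0 → IsDist (κ θ)) :
    ∑ θ, w θ * ent (conv p0 (κ θ)) ≤ ent (conv p0 (fun x => ∑ θ, w θ * κ θ x)) := by
  have h := ent_concave (κ := fun θ => conv p0 (κ θ)) hw fun θ h => isDist_conv h0 (hκ θ h)
  simp only [conv_sum_right] at h
  exact h

lemma sum_sub_right {p : G → ℝ} (hp : IsDist p) (x : G) : ∑ u, p (u - x) = 1 := by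
  rw [← hp.sum]; exact Equiv.sum_comp (Equiv.subRight x) p

lemma sum_conv_fb {p q : G → ℝ} (hp : IsDist p) (hq : IsDist q) (x : G) :
    ∑ u, conv p q u * fb p q u x = p x := by
  simp only [conv_mul_fb hp hq, ← Finset.mul_sum, sum_sub_right hq, mul_one]

lemma sum_ent_conv_fb {p0 p q : G → ℝ} (h0 : IsDist p0) (hp : IsDist p) (hq : IsDist q) :
    ∑ u, conv p q u * ent (conv p0 (fb p q u)) ≤ ent (conv p0 p) := by
  have h := ent_conv_concave h0 (isDist_conv hp hq) (isDist_fb hp hq)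
  simp only [sum_conv_fb hp hq] at h
  exact h

variable {p1 p2 q1 q2 : G → ℝ}

lemma sum_wt_Zk (h1 : IsDist p1) (h2 : IsDist p2) (h3 : IsDist q1) (h4 : IsDist q2) (a : G) :
    ∑ θ, wt p1 p2 q1 q2 θ * Zk p1 p2 q1 q2 θ a = conv p1 q1 a := by
  have : ∀ θ : G × G, wt p1 p2 q1 q2 θ * Zk p1 p2 q1 q2 θ a =
      ∑ x, (p1 x * p2 (θ.1 - x)) * (q1 (a - x) * q2 (θ.2 - (a - x))) := by
    intro θ
    simp only [wt, Zk, prodDist, conv_eq (fb p1 p2 θ.1), Finset.mul_sum]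
    apply Finset.sum_congr rfl
    intro x _
    rw [← conv_mul_fb h1 h2, ← conv_mul_fb h3 h4]; ring
  simp only [this]
  rw [Finset.sum_comm, conv_eq]
  apply Finset.sum_congr rfl
  intro x _
  rw [Fintype.sum_prod_type]
  simp only [← Finset.mul_sum, sum_sub_right h4, ← Finset.sum_mul, sum_sub_right h2, mul_one]

lemma sum_ent_conv_Zk {p0 : G → ℝ} (h0 : IsDist p0) (h1 : IsDist p1) (h2 : IsDist p2)
    (h3 : IsDist q1) (h4 : IsDist q2) :
    ∑ θ, wt p1 p2 q1 q2 θ * ent (conv p0 (Zk p1 p2 q1 q2 θ)) ≤ ent (conv p0 (conv p1 q1)) := by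
  have h := ent_conv_concave h0 (isDist_wt h1 h2 h3 h4) (isDist_Zk h1 h2 h3 h4)
  simp only [sum_wt_Zk h1 h2 h3 h4] at h
  exact h

lemma sum_wt_fst (h3 : IsDist q1) (h4 : IsDist q2) (φ : G → ℝ) :
    ∑ θ, wt p1 p2 q1 q2 θ * φ θ.1 = ∑ u, conv p1 p2 u * φ u := by
  rw [Fintype.sum_prod_type]
  apply Finset.sum_congr rfl
  intro u _
  simp only [wt, prodDist]
  rw [← Finset.sum_mul, ← Finset.mul_sum, (isDist_conv h3 h4).sum, mul_one]

lemma sum_wt_snd (h1 : IsDist p1) (h2 : IsDist p2) (φ : G → ℝ) :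
    ∑ θ, wt p1 p2 q1 q2 θ * φ θ.2 = ∑ u, conv q1 q2 u * φ u := by
  rw [Fintype.sum_prod_type_right]
  apply Finset.sum_congr rfl
  intro u _
  simp only [wt, prodDist]
  rw [← Finset.sum_mul, ← Finset.sum_mul, (isDist_conv h1 h2).sum, one_mul]

/-- the functional to be minimised -/
def tau (p0 p q : G → ℝ) : ℝ :=
  ent (conv p q) - ent p / 2 - ent q / 2 +
    (1 / 20) * ((ent (conv p0 p) - ent p / 2) + (ent (conv p0 q) - ent q / 2))

lemma continuous_ent : Continuous (fun p : G → ℝ => ent p) := by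
  simp only [ent_eq]
  exact continuous_finsetSum _ fun a _ => Real.continuous_negMulLog.comp (continuous_apply a)

lemma continuous_conv : Continuous (fun z : (G → ℝ) × (G → ℝ) => conv z.1 z.2) := by
  apply continuous_pi
  intro a
  simp only [conv_eq]
  fun_prop

lemma continuous_tau (p0 : G → ℝ) :
    Continuous (fun z : (G → ℝ) × (G → ℝ) => tau p0 z.1 z.2) := by
  unfold tau
  have c := continuous_ent (G := G)
  have h1 := c.comp (continuous_conv (G := G))
  have h2 : Continuous (fun z : (G → ℝ) × (G → ℝ) => ent z.1) := c.comp continuous_fst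
  have h3 : Continuous (fun z : (G → ℝ) × (G → ℝ) => ent z.2) := c.comp continuous_snd
  have h4 : Continuous (fun z : (G → ℝ) × (G → ℝ) => ent (conv p0 z.1)) :=
    h1.comp (continuous_const.prodMk continuous_fst)
  have h5 : Continuous (fun z : (G → ℝ) × (G → ℝ) => ent (conv p0 z.2)) :=
    h1.comp (continuous_const.prodMk continuous_snd)
  simp only [Function.comp_def] at h1
  fun_prop

lemma exists_min {p0 : G → ℝ} (h0 : IsDist p0) : ∃ p q : G → ℝ, IsDist p ∧ IsDist q ∧
    ∀ p' q' : G → ℝ, IsDist p' → IsDist q' → tau p0 p q ≤ tau p0 p' q' := by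
  have hK : IsCompact (stdSimplex ℝ G ×ˢ stdSimplex ℝ G) :=
    (isCompact_stdSimplex ℝ G).prod (isCompact_stdSimplex ℝ G)
  have hmem : ∀ p : G → ℝ, p ∈ stdSimplex ℝ G ↔ IsDist p := fun p => by
    rw [isDist_iff]; rfl
  obtain ⟨⟨p, q⟩, hpq, hmin⟩ := hK.exists_isMinOn ⟨(p0, p0), by simp [hmem, h0]⟩
    (continuous_tau p0).continuousOn
  simp only [Set.mem_prod, hmem] at hpq
  refine ⟨p, q, hpq.1, hpq.2, fun p' q' hp' hq' => ?_⟩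
  exact hmin (show (p', q') ∈ _ by simp [hmem, hp', hq'])

lemma min_avg (hc : (2 : G) = 0) {p0 : G → ℝ} (h0 : IsDist p0) {t : ℝ}
    (ht : ∀ p' q' : G → ℝ, IsDist p' → IsDist q' → t ≤ tau p0 p' q')
    (h1 : IsDist p1) (h2 : IsDist p2) (h3 : IsDist q1) (h4 : IsDist q2) :
    t ≤ (T4 p1 p2 q1 q2 - ent (conv p1 p2) - ent (conv q1 q2))
      - (ent p1 + ent p2 - ent (conv p1 p2)) / 2 - (ent q1 + ent q2 - ent (conv q1 q2)) / 2
      + (1 / 20) * ((ent (conv p0 p1) - (ent p1 + ent p2 - ent (conv p1 p2)) / 2)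
        + (ent (conv p0 q1) - (ent q1 + ent q2 - ent (conv q1 q2)) / 2)) := by
  have hw := isDist_wt h1 h2 h3 h4
  have key : ∑ θ, wt p1 p2 q1 q2 θ * t ≤
      ∑ θ, wt p1 p2 q1 q2 θ * tau p0 (fb p1 p2 θ.1) (fb q1 q2 θ.2) := by
    apply Finset.sum_le_sum
    intro θ _
    by_cases h : wt p1 p2 q1 q2 θ = 0
    · simp [h]
    · exact mul_le_mul_of_nonneg_left (ht _ _ (isDist_fb h1 h2 _ (left_ne_zero_of_mul h))
        (isDist_fb h3 h4 _ (right_ne_zero_of_mul h))) (hw.1 θ)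
  rw [← Finset.sum_mul, hw.sum, one_mul] at key
  have e : ∑ θ, wt p1 p2 q1 q2 θ * tau p0 (fb p1 p2 θ.1) (fb q1 q2 θ.2) =
      ∑ θ, wt p1 p2 q1 q2 θ * ent (Zk p1 p2 q1 q2 θ)
      - (∑ θ, wt p1 p2 q1 q2 θ * ent (fb p1 p2 θ.1)) / 2
      - (∑ θ, wt p1 p2 q1 q2 θ * ent (fb q1 q2 θ.2)) / 2
      + (1 / 20) * ((∑ θ, wt p1 p2 q1 q2 θ * ent (conv p0 (fb p1 p2 θ.1))
        - (∑ θ, wt p1 p2 q1 q2 θ * ent (fb p1 p2 θ.1)) / 2)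
      + (∑ θ, wt p1 p2 q1 q2 θ * ent (conv p0 (fb q1 q2 θ.2))
        - (∑ θ, wt p1 p2 q1 q2 θ * ent (fb q1 q2 θ.2)) / 2)) := by
    simp only [Finset.sum_div, Finset.mul_sum, ← Finset.sum_add_distrib, ← Finset.sum_sub_distrib]
    apply Finset.sum_congr rfl
    intro θ _
    simp only [tau, Zk]
    ring
  rw [e, sum_ent_Zk hc h1 h2 h3 h4, sum_wt_fst h3 h4 (fun u => ent (fb p1 p2 u)),
    sum_wt_snd h1 h2 (fun u => ent (fb q1 q2 u)),
    sum_wt_fst h3 h4 (fun u => ent (conv p0 (fb p1 p2 u))),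
    sum_wt_snd h1 h2 (fun u => ent (conv p0 (fb q1 q2 u))), sum_ent_fb h1 h2, sum_ent_fb h3 h4]
    at key
  have a1 := sum_ent_conv_fb h0 h1 h2
  have a2 := sum_ent_conv_fb h0 h3 h4
  linarith

/-- averaged minimality for the endgame -/
lemma min_avg2 (hc : (2 : G) = 0) {p0 : G → ℝ} (h0 : IsDist p0) {t : ℝ}
    (ht : ∀ p' q' : G → ℝ, IsDist p' → IsDist q' → t ≤ tau p0 p' q')
    (h1 : IsDist p1) (h2 : IsDist p2) (h3 : IsDist q1) (h4 : IsDist q2) :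
    t ≤ 2 * (ent (conv p1 q1) + ent (conv p2 q2)) + 2 * (ent (conv p1 q2) + ent (conv p2 q1))
      + (ent (conv p1 p2) + ent (conv q1 q2)) - 2 * T4 p1 p2 q1 q2
      - 3 * ent (conv (conv p1 p2) (conv q1 q2))
      - (T4 p1 p2 q1 q2 - ent (conv p1 p2) - ent (conv q1 q2))
      + (1 / 10) * (ent (conv p0 (conv p1 q1))
        - (T4 p1 p2 q1 q2 - ent (conv p1 p2) - ent (conv q1 q2)) / 2) := by
  have hw := isDist_wt h1 h2 h3 h4
  have key : ∑ θ, wt p1 p2 q1 q2 θ * t ≤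
      ∑ θ, wt p1 p2 q1 q2 θ * tau p0 (Zk p1 p2 q1 q2 θ) (Zk p1 p2 q1 q2 θ) := by
    apply Finset.sum_le_sum
    intro θ _
    by_cases h : wt p1 p2 q1 q2 θ = 0
    · simp [h]
    · exact mul_le_mul_of_nonneg_left (ht _ _ (isDist_Zk h1 h2 h3 h4 _ h)
        (isDist_Zk h1 h2 h3 h4 _ h)) (hw.1 θ)
  rw [← Finset.sum_mul, hw.sum, one_mul] at key
  have e : ∑ θ, wt p1 p2 q1 q2 θ * tau p0 (Zk p1 p2 q1 q2 θ) (Zk p1 p2 q1 q2 θ) =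
      ∑ θ, wt p1 p2 q1 q2 θ * ent (conv (Zk p1 p2 q1 q2 θ) (Zk p1 p2 q1 q2 θ))
      - (∑ θ, wt p1 p2 q1 q2 θ * ent (Zk p1 p2 q1 q2 θ))
      + (1 / 10) * (∑ θ, wt p1 p2 q1 q2 θ * ent (conv p0 (Zk p1 p2 q1 q2 θ))
        - (∑ θ, wt p1 p2 q1 q2 θ * ent (Zk p1 p2 q1 q2 θ)) / 2) := by
    simp only [Finset.sum_div, Finset.mul_sum, ← Finset.sum_add_distrib, ← Finset.sum_sub_distrib]
    apply Finset.sum_congr rfl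
    intro θ _
    simp only [tau]
    ring
  rw [e, sum_ent_Zk hc h1 h2 h3 h4] at key
  have a1 := sum_ent_conv_Zk h0 h1 h2 h3 h4
  have a2 := BSG hc h1 h2 h3 h4
  linarith

/-- a minimiser has zero distance -/
lemma tau_min_zero (hc : (2 : G) = 0) {p0 p q : G → ℝ} (h0 : IsDist p0) (hp : IsDist p)
    (hq : IsDist q) (hmin : ∀ p' q' : G → ℝ, IsDist p' → IsDist q' → tau p0 p q ≤ tau p0 p' q') :
    ent (conv p q) ≤ ent p / 2 + ent q / 2 := by
  have hpq := isDist_conv hp hq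
  have hpp := isDist_conv hp hp
  have hqq := isDist_conv hq hq
  have A := hmin (conv p q) (conv q p) hpq (isDist_conv hq hp)
  have A' := hmin (conv p p) (conv q q) hpp hqq
  have B := min_avg hc h0 hmin hp hq hq hp
  have B' := min_avg hc h0 hmin hp hp hq hq
  have C := min_avg2 hc h0 hmin hp hq hq hp
  have D := T4_submod hc hp hq hq hp
  have D' := T4_submod hc hp hp hq hq
  rw [T4_swap p p q q] at B' D'
  have eσ : conv (conv p p) (conv q q) = conv (conv p q) (conv q p) := by
    rw [conv_assoc', ← conv_assoc' p q q, conv_comm' (conv p q) q, conv_assoc' p q (conv q p),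
      conv_comm' q p]
    
  unfold tau at A A' B B' C
  rw [eσ] at A' D'
  rw [conv_comm' q p] at *
  have k1 := ent_KV h0 hp hq
  have k2 := ent_KV h0 hq hp
  have k3 := ent_KV h0 hp hp
  have k4 := ent_KV h0 hq hq
  have k5 := ent_KV hp hq hp
  have k6 := ent_KV hq hp hq
  have l5 := ent_le_conv hpp hq
  have l6 := ent_le_conv hqq hp
  have l1 := ent_le_conv hp hq
  have l2 := ent_le_conv hq hp
  have e5 : conv p (conv q p) = conv (conv p p) q := by
    rw [conv_comm' q p, conv_assoc']
  have e6 : conv q (conv p q) = conv (conv q q) p := by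
    rw [conv_comm' p q, conv_assoc']
  rw [e5] at k5
  rw [e6] at k6
  rw [conv_comm' q p] at *
  linarith

end PFR

section Quot
variable {n : ℕ} (V : Submodule (ZMod 2) (Fvec n))

/-- cardinality of `V` as a real number -/
def nV : ℝ := (Nat.card (V : Set (Fvec n)) : ℝ)

lemma nV_pos : 0 < nV V := by
  unfold nV
  have : Nonempty (V : Set (Fvec n)) := ⟨⟨0, V.zero_mem⟩⟩
  exact_mod_cast Nat.card_pos

open scoped Classical in
lemma unifOn_apply (x : Fvec n) :
    unifOn (V : Set (Fvec n)) x = if x ∈ V then (nV V)⁻¹ else 0 := by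
  unfold unifOn nV
  rw [Set.indicator_apply]
  rfl

open scoped Classical in
lemma sum_mem_V : ∑ x : Fvec n, (if x ∈ V then (1 : ℝ) else 0) = nV V := by
  unfold nV
  rw [Finset.sum_boole, Nat.card_eq_fintype_card, Fintype.card_subtype]
  rfl

lemma isDist_unif : IsDist (unifOn (V : Set (Fvec n))) := by
  classical
  rw [isDist_iff]
  constructor
  · intro x; rw [unifOn_apply]; split_ifs
    · exact inv_nonneg.2 (nV_pos V).le
    · exact le_rfl
  · have : ∀ x, unifOn (V : Set (Fvec n)) x = (nV V)⁻¹ * (if x ∈ V then (1 : ℝ) else 0) := by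
      intro x; rw [unifOn_apply]; split_ifs <;> simp
    simp only [this, ← Finset.mul_sum, sum_mem_V]
    exact inv_mul_cancel₀ (nV_pos V).ne'

lemma ent_unif : ent (unifOn (V : Set (Fvec n))) = Real.log (nV V) := by
  classical
  rw [ent_eq]
  have : ∀ x, Real.negMulLog (unifOn (V : Set (Fvec n)) x) =
      ((nV V)⁻¹ * Real.log (nV V)) * (if x ∈ V then (1 : ℝ) else 0) := by
    intro x; rw [unifOn_apply]; split_ifs <;> simp [Real.negMulLog]
  simp only [this, ← Finset.mul_sum, sum_mem_V]
  have := (nV_pos V).ne'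
  field_simp

lemma conv_unif_apply (r : Fvec n → ℝ) (x : Fvec n) :
    conv r (unifOn (V : Set (Fvec n))) x = push V.mkQ r (V.mkQ x) * (nV V)⁻¹ := by
  classical
  rw [conv_eq, push_eq, Finset.sum_mul]
  apply Finset.sum_congr rfl
  intro y _
  rw [unifOn_apply]
  have : (x - y ∈ V) ↔ V.mkQ y = V.mkQ x := by
    simp only [Submodule.mkQ_apply]
    rw [eq_comm, Submodule.Quotient.eq]
  simp only [this]
  split_ifs <;> simp

lemma push_one (c : Fvec n ⧸ V) : push V.mkQ (fun _ => (1 : ℝ)) c = nV V := by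
  classical
  obtain ⟨x, rfl⟩ := V.mkQ_surjective c
  rw [push_eq, ← sum_mem_V,
    ← Equiv.sum_comp (Equiv.subRight x) (fun y => if y ∈ V then (1 : ℝ) else 0)]
  apply Finset.sum_congr rfl
  intro y _
  have : (y - x ∈ V) ↔ V.mkQ y = V.mkQ x := by
    simp only [Submodule.mkQ_apply]
    rw [Submodule.Quotient.eq]
  simp only [Equiv.subRight_apply, this]

lemma ent_conv_unif {r : Fvec n → ℝ} (hr : IsDist r) :
    ent (conv r (unifOn (V : Set (Fvec n)))) = ent (push V.mkQ r) + Real.log (nV V) := by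
  classical
  have : Fintype (Fvec n ⧸ V) := Fintype.ofFinite _
  have hN := (nV_pos V).ne'
  have h := sum_push V.mkQ (fun _ => (1 : ℝ))
    (fun c => Real.negMulLog (push V.mkQ r c * (nV V)⁻¹))
  simp only [push_one, one_mul] at h
  rw [ent_eq]
  simp only [conv_unif_apply]
  rw [← h, ent_eq]
  have e : ∀ c, nV V * Real.negMulLog (push V.mkQ r c * (nV V)⁻¹) =
      Real.negMulLog (push V.mkQ r c) + push V.mkQ r c * Real.log (nV V) := by
    intro c
    rw [Real.negMulLog_mul]
    simp only [Real.negMulLog, Real.log_inv]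
    field_simp
  simp only [e, Finset.sum_add_distrib, ← Finset.sum_mul, (isDist_push V.mkQ hr).sum, one_mul]

lemma conv_unif_of_inv {p : Fvec n → ℝ} (h : ∀ v ∈ V, ∀ x, p (x - v) = p x) :
    conv p (unifOn (V : Set (Fvec n))) = p := by
  classical
  ext x
  rw [conv_comm', conv_eq]
  have : ∀ y, unifOn (V : Set (Fvec n)) y * p (x - y) = unifOn (V : Set (Fvec n)) y * p x := by
    intro y
    rw [unifOn_apply]
    split_ifs with hy
    · rw [h y hy]
    · simp
  simp only [this, ← Finset.sum_mul, (isDist_unif V).sum, one_mul]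

lemma ent_push_zero {q : Fvec n → ℝ} (hq : IsDist q)
    (h : ∀ y y', q y ≠ 0 → q y' ≠ 0 → y - y' ∈ V) : ent (push V.mkQ q) = 0 := by
  classical
  have : Fintype (Fvec n ⧸ V) := Fintype.ofFinite _
  rw [ent_push]
  unfold HH
  apply Finset.sum_eq_zero
  intro y _
  by_cases hy : q y = 0
  · simp [hy]
  have : cm q V.mkQ y = 1 := by
    rw [← hq.sum]
    unfold cm
    apply Finset.sum_congr rfl
    intro y' _
    by_cases hy' : q y' = 0
    · simp [hy']
    · rw [if_pos]
      simp only [Submodule.mkQ_apply]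
      rw [Submodule.Quotient.eq]
      exact h _ _ hy' hy
  simp [this]

/-- the stabiliser of `p` -/
def stab (p : Fvec n → ℝ) : Submodule (ZMod 2) (Fvec n) where
  carrier := {v | ∀ x, p (x - v) = p x}
  zero_mem' := by intro x; simp
  add_mem' := by
    intro a b ha hb x
    rw [← sub_sub, hb, ha]
  smul_mem' := by
    intro c a ha
    have hc : c = 0 ∨ c = 1 := by revert c; decide
    rcases hc with rfl | rfl
    · intro x; simp
    · intro x; rw [one_smul]; exact ha x

lemma jensen_eq {p q : Fvec n → ℝ} (hp : IsDist p) (hq : IsDist q)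
    (h : ent (conv p q) ≤ ent p) (y y' : Fvec n) (hy : q y ≠ 0) (hy' : q y' ≠ 0) (z : Fvec n) :
    p (z - y) = p (z - y') := by
  have hle : ∀ z, ∑ y, q y * Real.negMulLog (p (z - y)) ≤ Real.negMulLog (conv q p z) := by
    intro z
    rw [conv_eq]
    exact Real.concaveOn_negMulLog.le_map_sum (fun i _ => hq.1 i) hq.sum
      (fun i _ => Set.mem_Ici.2 (hp.1 _))
  have hsum : ∑ z, ∑ y, q y * Real.negMulLog (p (z - y)) = ent p := by
    rw [Finset.sum_comm]
    have : ∀ y, ∑ z, q y * Real.negMulLog (p (z - y)) = q y * ent p := by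
      intro y
      rw [← Finset.mul_sum, ent_eq]
      congr 1
      exact Equiv.sum_comp (Equiv.subRight y) (fun x => Real.negMulLog (p x))
    simp only [this, ← Finset.sum_mul, hq.sum, one_mul]
  have heq : Real.negMulLog (conv q p z) = ∑ y, q y * Real.negMulLog (p (z - y)) := by
    by_contra hne
    have hlt := lt_of_le_of_ne (hle z) (Ne.symm hne)
    have := Finset.sum_lt_sum (fun i _ => hle i) ⟨z, Finset.mem_univ z, hlt⟩
    rw [hsum, ← ent_eq, conv_comm'] at this
    linarith
  rw [conv_eq] at heq
  have := (Real.strictConcaveOn_negMulLog.map_sum_eq_iff_of_nonneg (t := Finset.univ) (w := q)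
    (p := fun y => p (z - y)) (fun i _ => hq.1 i) hq.sum (fun i _ => Set.mem_Ici.2 (hp.1 _))).1 heq
  exact this (Finset.mem_univ y) hy (Finset.mem_univ y') hy'

lemma hundred {p q : Fvec n → ℝ} (hp : IsDist p) (hq : IsDist q)
    (h : ent (conv p q) ≤ ent p / 2 + ent q / 2) :
    ∃ V : Submodule (ZMod 2) (Fvec n), conv p (unifOn (V : Set (Fvec n))) = p ∧
      ent p = Real.log (nV V) := by
  have l1 := ent_le_conv hp hq
  have l2 := ent_le_conv hq hp
  rw [conv_comm'] at l2
  refine ⟨stab p, ?_⟩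
  have hinv := conv_unif_of_inv (stab p) (p := p) fun v hv x => hv x
  refine ⟨hinv, ?_⟩
  have g1 := ent_le_conv (isDist_unif (stab p)) hp
  rw [conv_comm', hinv, ent_unif] at g1
  have g2 := ent_le_conv hq (isDist_unif (stab p))
  rw [ent_conv_unif _ hq, ent_push_zero (stab p) hq] at g2
  · linarith
  · intro y y' hy hy' x
    have := jensen_eq hp hq (by linarith) y y' hy hy' (x + y')
    simp only [add_sub_cancel_right] at this
    rw [← this]
    congr 1
    abel

lemma two_zero : (2 : Fvec n) = 0 := by
  ext i; exact (by decide : (2 : ZMod 2) = 0)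

lemma tau_comm (p0 p q : Fvec n → ℝ) : tau p0 p q = tau p0 q p := by
  unfold tau; rw [conv_comm' p q]; ring

lemma pfr_aux {p0 p q : Fvec n → ℝ} (h0 : IsDist p0) (hp : IsDist p) (hq : IsDist q)
    (hmin : ∀ p' q' : Fvec n → ℝ, IsDist p' → IsDist q' → tau p0 p q ≤ tau p0 p' q')
    (hle : ent (conv p0 p) - ent p / 2 ≤ ent (conv p0 q) - ent q / 2) :
    ∃ V : Submodule (ZMod 2) (Fvec n),
      ent (unifOn (V : Set (Fvec n))) ≤ ent p0 + 22 * (ent (conv p0 p0) - ent p0) ∧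
      ent (push V.mkQ p0) ≤ 22 * (ent (conv p0 p0) - ent p0) := by
  have hz := tau_min_zero two_zero h0 hp hq hmin
  obtain ⟨V, hV, hpV⟩ := hundred hp hq hz
  refine ⟨V, ?_⟩
  have : Fintype (Fvec n ⧸ V) := Fintype.ofFinite _
  have m0 := hmin p0 p0 h0 h0
  unfold tau at m0
  have l1 := ent_le_conv hp hq
  have l2 := ent_le_conv hq hp
  rw [conv_comm'] at l2
  have c1 := ent_le_conv (isDist_conv h0 (isDist_unif V)) hp
  rw [conv_assoc', conv_comm' (unifOn _) p, hV, ent_conv_unif V h0] at c1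
  have c2 := ent_le_conv h0 (isDist_unif V)
  rw [ent_conv_unif V h0] at c2
  have c3 := ent_nonneg (isDist_push V.mkQ h0)
  rw [ent_unif]
  constructor <;> linarith

lemma pfr {p0 : Fvec n → ℝ} (h0 : IsDist p0) :
    ∃ V : Submodule (ZMod 2) (Fvec n),
      ent (unifOn (V : Set (Fvec n))) ≤ ent p0 + 22 * (ent (conv p0 p0) - ent p0) ∧
      ent (push V.mkQ p0) ≤ 22 * (ent (conv p0 p0) - ent p0) := by
  obtain ⟨p, q, hp, hq, hmin⟩ := exists_min h0
  rcases le_total (ent (conv p0 p) - ent p / 2) (ent (conv p0 q) - ent q / 2) with h | h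
  · exact pfr_aux h0 hp hq hmin h
  · exact pfr_aux h0 hq hp (by rw [tau_comm]; exact hmin) h

lemma pfr' {p0 : Fvec n → ℝ} (h0 : IsDist p0) :
    ∃ V : Submodule (ZMod 2) (Fvec n),
      ent (unifOn (V : Set (Fvec n))) ≤ 7 * ent p0 ∧
      ent (push V.mkQ p0) ≤ 22 * (ent (conv p0 p0) - ent p0) := by
  by_cases h : 22 * (ent (conv p0 p0) - ent p0) ≤ 6 * ent p0
  · obtain ⟨V, h1, h2⟩ := pfr h0
    exact ⟨V, by linarith, h2⟩
  · refine ⟨⊥, ?_, ?_⟩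
    · have : nV (⊥ : Submodule (ZMod 2) (Fvec n)) = 1 := by
        unfold nV; simp
      rw [ent_unif, this, Real.log_one]
      have := ent_nonneg h0
      linarith
    · have : Fintype (Fvec n ⧸ (⊥ : Submodule (ZMod 2) (Fvec n))) := Fintype.ofFinite _
      have h1 : ent (push (⊥ : Submodule (ZMod 2) (Fvec n)).mkQ p0) ≤ ent p0 := by
        rw [ent_push, ← HH_id p0]
        apply HH_mono h0
        rintro x y h
        simp only [id] at h
        rw [h]
      have := ent_nonneg h0
      linarith

lemma push_conv (x y : Fvec n → ℝ) :
    push V.mkQ (conv x y) = conv (push V.mkQ x) (push V.mkQ y) := by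
  have : Fintype (Fvec n ⧸ V) := Fintype.ofFinite _
  rw [conv_eq_push, conv_eq_push, ← push_prod, push_push, push_push]
  simp only [map_add]

lemma ent_push_add_le {x y : Fvec n → ℝ} (hx : IsDist x) (hy : IsDist y) :
    ent (push V.mkQ x) + ent (push V.mkQ y) ≤ 2 * ent (push V.mkQ (conv x y)) := by
  have : Fintype (Fvec n ⧸ V) := Fintype.ofFinite _
  have a := ent_le_conv (isDist_push V.mkQ hx) (isDist_push V.mkQ hy)
  have b := ent_le_conv (isDist_push V.mkQ hy) (isDist_push V.mkQ hx)
  rw [conv_comm'] at b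
  rw [push_conv]
  linarith

lemma condEnt_jointSum {p q : Fvec n → ℝ} (hp : IsDist p) (hq : IsDist q) :
    condEnt (jointSum p q) = ent p + ent q - ent (conv p q) := by
  unfold condEnt
  rw [finsum_eq_sum_of_fintype]
  simp only [push_snd_jointSum, fiber_jointSum]
  exact sum_ent_fb hp hq

lemma sCond_jointSum {p1 p2 q1 q2 : Fvec n → ℝ} (h1 : IsDist p1) (h2 : IsDist p2)
    (h3 : IsDist q1) (h4 : IsDist q2) :
    sCond (jointSum p1 p2) (jointSum q1 q2) =
      (ent p1 + ent p2) + (ent q1 + ent q2) - T4 p1 p2 q1 q2 := by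
  unfold sCond
  simp only [finsum_eq_sum_of_fintype, push_snd_jointSum, fiber_jointSum]
  have e : ∑ u, ∑ w, conv p1 p2 u * conv q1 q2 w * sDouble (fb p1 p2 u) (fb q1 q2 w) =
      ∑ θ, (wt p1 p2 q1 q2 θ * ent (fb p1 p2 θ.1) + wt p1 p2 q1 q2 θ * ent (fb q1 q2 θ.2)
        - wt p1 p2 q1 q2 θ * ent (Zk p1 p2 q1 q2 θ)) := by
    rw [Fintype.sum_prod_type]
    apply Finset.sum_congr rfl; intro u _
    apply Finset.sum_congr rfl; intro w _
    simp only [wt, prodDist, sDouble, Zk]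
    ring
  rw [e, Finset.sum_sub_distrib, Finset.sum_add_distrib, sum_ent_Zk two_zero h1 h2 h3 h4,
    sum_wt_fst h3 h4 (fun u => ent (fb p1 p2 u)), sum_wt_snd h1 h2 (fun u => ent (fb q1 q2 u)),
    sum_ent_fb h1 h2, sum_ent_fb h3 h4]
  ring

end Quot

/-- **Endgame Lemma.** -/
theorem statement12 (n : ℕ) (η κ : ℝ) (hη : η ∈ Set.Ioc (0 : ℝ) (1 / 2)) (hκ : 0 < κ)
    (p q : Fvec n → ℝ) (hp : IsDist p) (hq : IsDist q)
    (hs : sDouble p q ≥ η * (ent p + ent q))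
    (h1 : sDouble (conv p p) (conv q q) ≤ η * (ent (conv p p) + ent (conv q q)) + κ)
    (h2 : sDouble (conv p q) (conv p q) ≤ η * (ent (conv p q) + ent (conv p q)) + κ)
    (h3 : sCond (jointSum p p) (jointSum q q) ≤
      η * (condEnt (jointSum p p) + condEnt (jointSum q q)) + κ)
    (h4 : sCond (jointSum p q) (jointSum q p) ≤
      η * (condEnt (jointSum p q) + condEnt (jointSum q p)) + κ) :
    ∃ Vf : Fvec n → Fvec n → Submodule (ZMod 2) (Fvec n),
      (∀ u ∈ Function.support (conv p q), ∀ w ∈ Function.support (conv q p),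
        ent (unifOn ((Vf u w) : Set (Fvec n))) ≤
          7 * (ent (fiber (jointSum p q) u) + ent (fiber (jointSum q p) w))) ∧
      (∑ᶠ u, ∑ᶠ w, conv p q u * conv q p w *
          (ent (push (Vf u w).mkQ (fiber (jointSum p q) u)) +
            ent (push (Vf u w).mkQ (fiber (jointSum q p) w)))) ≤ 480 * κ := by
  classical
  have hVf : ∀ u w : Fvec n, ∃ V : Submodule (ZMod 2) (Fvec n), wt p q q p (u, w) ≠ 0 →
      ent (unifOn (V : Set (Fvec n))) ≤ 7 * ent (Zk p q q p (u, w)) ∧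
      ent (push V.mkQ (Zk p q q p (u, w))) ≤
        22 * (ent (conv (Zk p q q p (u, w)) (Zk p q q p (u, w))) - ent (Zk p q q p (u, w))) := by
    intro u w
    by_cases h : wt p q q p (u, w) ≠ 0
    · obtain ⟨V, hV⟩ := pfr' (isDist_Zk hp hq hq hp (u, w) h)
      exact ⟨V, fun _ => hV⟩
    · exact ⟨⊥, fun h' => absurd h' h⟩
  choose Vf hVf using hVf
  refine ⟨Vf, ?_, ?_⟩
  · intro u hu w hw
    rw [Function.mem_support] at hu hw
    have h := (hVf u w (mul_ne_zero hu hw)).1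
    have h' := ent_conv_le (isDist_fb hp hq u hu) (isDist_fb hq hp w hw)
    rw [fiber_jointSum, fiber_jointSum]
    unfold Zk at h
    linarith
  · simp only [finsum_eq_sum_of_fintype, fiber_jointSum]
    have hb : ∑ u, ∑ w, conv p q u * conv q p w *
          (ent (push (Vf u w).mkQ (fb p q u)) + ent (push (Vf u w).mkQ (fb q p w))) ≤
        ∑ θ, (44 * (wt p q q p θ * ent (conv (Zk p q q p θ) (Zk p q q p θ)))
          - 44 * (wt p q q p θ * ent (Zk p q q p θ))) := by
      rw [Fintype.sum_prod_type]
      apply Finset.sum_le_sum; intro u _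
      apply Finset.sum_le_sum; intro w _
      have e : conv p q u * conv q p w = wt p q q p (u, w) := rfl
      rw [e]
      by_cases h : wt p q q p (u, w) = 0
      · simp [h]
      have h0 : 0 ≤ wt p q q p (u, w) := (isDist_wt hp hq hq hp).1 _
      have k1 := (hVf u w h).2
      have k2 := ent_push_add_le (Vf u w) (isDist_fb hp hq u (left_ne_zero_of_mul h))
        (isDist_fb hq hp w (right_ne_zero_of_mul h))
      have k3 : ent (push (Vf u w).mkQ (fb p q u)) + ent (push (Vf u w).mkQ (fb q p w)) ≤
          44 * (ent (conv (Zk p q q p (u, w)) (Zk p q q p (u, w))) - ent (Zk p q q p (u, w))) := by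
        have : ent (push (Vf u w).mkQ (conv (fb p q u) (fb q p w))) ≤ _ := k1
        linarith
      have := mul_le_mul_of_nonneg_left k3 h0
      linarith
    refine hb.trans ?_
    rw [Finset.sum_sub_distrib, ← Finset.mul_sum, ← Finset.mul_sum,
      sum_ent_Zk two_zero hp hq hq hp]
    have hB := BSG two_zero hp hq hq hp
    rw [condEnt_jointSum hp hp, condEnt_jointSum hq hq, sCond_jointSum hp hp hq hq,
      T4_swap p p q q] at h3
    rw [condEnt_jointSum hp hq, condEnt_jointSum hq hp, sCond_jointSum hp hq hq hp] at h4
    have eσ : conv (conv p p) (conv q q) = conv (conv p q) (conv q p) := by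
      rw [conv_assoc', ← conv_assoc' p q q, conv_comm' (conv p q) q, conv_assoc' p q (conv q p),
        conv_comm' q p]
    unfold sDouble at hs h1 h2
    rw [eσ] at h1
    have ec : conv q p = conv p q := conv_comm' q p
    rw [ec] at h1 h4 hB ⊢
    linarith
end
end
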